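/- arXiv:math/0611576 — 2 statements merged into one kernel-verified Lean document; each statement's English description precedes it below -/
import Mathlib

section
/- Let s be a balanced standard episturmian sequence over an alphabet A such that at least 3 distinct letters occur in s, with directive sequence Δ = a·y·a·z, where a is a letter, y is a nonempty finite word whose letters are pairwise distinct and all different from a (so that a is the first repeated letter of Δ), and z is an infinite word whose first letter differs from a. Then a does not occur in z. -/
/-- The palindromic right closure `w⁽⁺⁾`: the shortest palindrome having `w` as a prefix. -/
def palClosure {A : Type*} [DecidableEq A] (w : List A) : List A :=
  w ++ (w.take (Nat.find (⟨w.length, by simp⟩ :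
    ∃ i, (w.drop i).reverse = w.drop i))).reverse

/-- Iterated palindromic closure: `Pal ε = ε`, `Pal (w·x) = (Pal w · x)⁽⁺⁾`. -/
def Pal {A : Type*} [DecidableEq A] (w : List A) : List A :=
  w.foldl (fun p x => palClosure (p ++ [x])) []

/-- `u` is a factor of the infinite word `s`. -/
def IsFactorOf {A : Type*} (u : List A) (s : ℕ → A) : Prop :=
  ∃ i : ℕ, u = (List.range u.length).map (fun j => s (i + j))

/-- `s` is balanced. -/
def IsBalanced {A : Type*} [DecidableEq A] (s : ℕ → A) : Prop :=
  ∀ u v : List A, IsFactorOf u s → IsFactorOf v s → u.length = v.length →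
    ∀ a : A, u.count a ≤ v.count a + 1

/-- `u` is a prefix of the infinite word `s`. -/
def IsPrefixOf {A : Type*} (u : List A) (s : ℕ → A) : Prop :=
  u = (List.range u.length).map s

/-- `s` is a standard episturmian sequence with directive sequence `Δ`. -/
def IsStdEpisturmian {A : Type*} [DecidableEq A] (s Δ : ℕ → A) : Prop :=
  ∀ n : ℕ, IsPrefixOf (Pal ((List.range n).map Δ)) s

/-- Concatenation of a finite word and an infinite word. -/
def wcat {A : Type*} (u : List A) (s : ℕ → A) : ℕ → A :=
  fun n => if h : n < u.length then u.get ⟨n, h⟩ else s (n - u.length)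

/-- The constant infinite word `c^ω`. -/
def constW {A : Type*} (c : A) : ℕ → A := fun _ => c

/-- The purely periodic infinite word `w^ω` (`d` is a default letter, irrelevant
when `w` is nonempty). -/
def perW {A : Type*} (w : List A) (d : A) : ℕ → A :=
  fun n => w.getD (n % w.length) d

/-- At least three distinct letters occur in `s`. -/
def ThreeLetters {A : Type*} (s : ℕ → A) : Prop :=
  ∃ a b c : A, a ≠ b ∧ a ≠ c ∧ b ≠ c ∧
    a ∈ Set.range s ∧ b ∈ Set.range s ∧ c ∈ Set.range s

/-!
The palindromic prefixes of `s` have lengths `L 0 < L 1 < ⋯`, the letter following the `n`-th one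
is `Δ n`, and `L (n + 1)` is `2 * L n + 1` if `Δ n` is new and `2 * L n - L m` for some earlier
occurrence `m < n` of `Δ n` otherwise. As no letter of `y` is `a`, the letter `a` occupies exactly
the even positions of the word `P = Pal (a·y)`, whose length is odd.

A third `a` at a place `N` of `Δ` makes `a·P·a` a factor of `s`: the prefix of length `L N` ends in
`P` preceded by `a`, because it starts with `P·a`. On the other hand, some factor of length
`|P| + 3` has `a` at every other position. It lies in `P·x·P` if some letter `x` of `Δ` does not
occur in `a·y`; otherwise the first letter of `z` occurs in `y`, and the factor is a union of two
overlapping mirror images of `P`. Such a factor contains `b·u·c` with `b, c ≠ a` and `u` having as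
many `a` as `P`, against balance.
-/

/-- Balance of `s` with respect to the single letter `a`; `IsBalanced s` asks it of all letters. -/
def IsBalancedIn {A : Type*} [DecidableEq A] (s : ℕ → A) (a : A) : Prop :=
  ∀ u v : List A, IsFactorOf u s → IsFactorOf v s → u.length = v.length →
    u.count a ≤ v.count a + 1

/-- The factor of `s` at the positions of `[m, n)` is a palindrome. Mirror positions `i`, `j` are
those with `i + j + 1 = m + n`, which avoids truncated subtraction. -/
def IsPalFactor {A : Type*} (s : ℕ → A) (m n : ℕ) : Prop :=
  ∀ i j, m ≤ i → m ≤ j → i + j + 1 = m + n → s i = s j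

/-- The factor of `s` of length `n` starting at position `i` has `a` at every other position,
beginning with the first one. -/
def IsAlternating {A : Type*} (s : ℕ → A) (a : A) (i n : ℕ) : Prop :=
  ∀ j < n, s (i + j) = a ↔ Even j

/-- The length of the `n`-th palindromic prefix `Pal(Δ(0)⋯Δ(n-1))`. -/
def palLength {A : Type*} [DecidableEq A] (Δ : ℕ → A) (n : ℕ) : ℕ :=
  (Pal ((List.range n).map Δ)).length

section PalClosure

variable {A : Type*} [DecidableEq A]

lemma prefix_palClosure (w : List A) : w <+: palClosure w :=
  List.prefix_append _ _

lemma reverse_palClosure (w : List A) : (palClosure w).reverse = palClosure w := by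
  have hex : ∃ i, (w.drop i).reverse = w.drop i := ⟨w.length, by simp⟩
  have hdef : palClosure w = w ++ (w.take (Nat.find hex)).reverse := rfl
  have hw : w.reverse = w.drop (Nat.find hex) ++ (w.take (Nat.find hex)).reverse := by
    conv_lhs => rw [← List.take_append_drop (Nat.find hex) w]
    rw [List.reverse_append, Nat.find_spec hex]
  rw [hdef, List.reverse_append, List.reverse_reverse, hw, ← List.append_assoc,
    List.take_append_drop]

lemma length_palClosure_le {w : List A} {t : ℕ} (h : (w.drop t).reverse = w.drop t) :
    (palClosure w).length ≤ w.length + t := by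
  have hfind : Nat.find (⟨t, h⟩ : ∃ i, (w.drop i).reverse = w.drop i) ≤ t := Nat.find_min' _ h
  simp only [palClosure, List.length_append, List.length_reverse, List.length_take]
  omega

lemma Pal_append_singleton (w : List A) (x : A) : Pal (w ++ [x]) = palClosure (Pal w ++ [x]) := by
  simp [Pal]

lemma reverse_Pal (w : List A) : (Pal w).reverse = Pal w := by
  rcases w.eq_nil_or_concat' with rfl | ⟨v, x, rfl⟩
  · simp [Pal]
  · rw [Pal_append_singleton, reverse_palClosure]

end PalClosure

section Factors

variable {A : Type*} {s : ℕ → A} {a : A} {m n i j d l r : ℕ} {u v : List A}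

lemma IsPrefixOf.getElem_eq (h : IsPrefixOf u s) (hi : i < u.length) : u[i] = s i := by
  rw [List.getElem_of_eq h hi, List.getElem_map, List.getElem_range]

lemma IsPrefixOf.of_prefix (hv : IsPrefixOf v s) (huv : u <+: v) : IsPrefixOf u s :=
  List.ext_getElem (by simp) fun i hi _ => by
    rw [huv.getElem hi, hv.getElem_eq, List.getElem_map, List.getElem_range]

lemma IsPrefixOf.reverse_drop_eq_iff (h : IsPrefixOf u s) :
    (u.drop m).reverse = u.drop m ↔ IsPalFactor s m u.length := by
  constructor
  · intro hrev i j hi hj hij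
    have hmirror := List.getElem_of_eq hrev (i := i - m) (by simp; omega)
    rw [List.getElem_reverse, List.getElem_drop, List.getElem_drop, h.getElem_eq,
      h.getElem_eq, List.length_drop] at hmirror
    convert hmirror.symm using 2 <;> omega
  · intro hpal
    refine List.ext_getElem List.length_reverse fun i hi _ => ?_
    simp only [List.length_reverse, List.length_drop] at hi
    rw [List.getElem_reverse, List.getElem_drop, List.getElem_drop, h.getElem_eq,
      h.getElem_eq, List.length_drop]
    exact hpal _ _ (by omega) (by omega) (by omega)

lemma IsAlternating.mono (h : IsAlternating s a i n) (hmn : m ≤ n) : IsAlternating s a i m :=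
  fun j hj => h j (hj.trans_le hmn)

lemma IsAlternating.succ (h : IsAlternating s a i n) (hn : Odd n) (hne : s (i + n) ≠ a) :
    IsAlternating s a i (n + 1) := by
  intro j hj
  rcases Nat.lt_succ_iff_lt_or_eq.1 hj with hj | rfl
  · exact h j hj
  · exact iff_of_false hne (Nat.not_even_iff_odd.2 hn)

lemma IsAlternating.glue (h : IsAlternating s a i m) (h' : IsAlternating s a (i + d) n)
    (hd : Even d) (hdm : d ≤ m) : IsAlternating s a i (d + n) := by
  intro j hj
  rcases lt_or_ge j m with hjm | hmj
  · exact h j hjm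
  · obtain ⟨t, rfl⟩ := Nat.exists_eq_add_of_le (hdm.trans hmj)
    rw [← add_assoc, h' t (by omega), Nat.even_add, iff_true_left hd]

lemma IsAlternating.reflect (h : IsAlternating s a i n) (hpal : IsPalFactor s l r) (hn : Odd n)
    (hi : l ≤ i) (hj : l ≤ j) (hij : i + j + n = l + r) : IsAlternating s a j n := by
  intro t ht
  have hmirror : s (j + t) = s (i + (n - 1 - t)) := hpal _ _ (by omega) (by omega) (by omega)
  rw [hmirror, h _ (by omega)]
  grind

end Factors

namespace IsBalancedIn

variable {A : Type*} [DecidableEq A] {s : ℕ → A} {a : A} {p q n : ℕ}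

lemma eq_of_flanked (hbal : IsBalancedIn s a)
    (hmid : ∀ j < n, s (p + 1 + j) = a ↔ s (q + 1 + j) = a)
    (hp : s p = a) (hpn : s (p + 1 + n) = a) (hq : s q ≠ a) : s (q + 1 + n) = a := by
  by_contra hqn
  let mid (i : ℕ) : List A := (List.range n).map fun j => s (i + 1 + j)
  let flanked (i : ℕ) : List A := s i :: (mid i ++ [s (i + 1 + n)])
  have hfactor (i : ℕ) : IsFactorOf (flanked i) s := by
    refine ⟨i, ?_⟩
    have hlen : (flanked i).length = n + 1 + 1 := by simp [flanked, mid]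
    rw [hlen, List.range_succ_eq_map, List.range_succ]
    simp [flanked, mid, Function.comp_def, add_assoc, add_comm 1]
  have hcount : (mid p).count a = (mid q).count a := by
    simp only [mid, List.count_eq_countP, List.countP_map]
    exact List.countP_congr fun j hj => by simpa using hmid j (List.mem_range.1 hj)
  have hle := hbal _ _ (hfactor p) (hfactor q) (by simp [flanked, mid])
  simp [flanked, hp, hpn, hq, hqn, hcount] at hle

lemma not_isAlternating_add_three (hbal : IsBalancedIn s a) (hn : Odd n) (hp : s p = a)
    (hP : IsAlternating s a (p + 1) n) (hpn : s (p + 1 + n) = a) (q : ℕ) :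
    ¬ IsAlternating s a q (n + 3) := by
  intro hq
  have hmid : ∀ j < n, s (p + 1 + j) = a ↔ s (q + 1 + 1 + j) = a := by
    intro j hj
    rw [hP j hj, add_assoc q, add_assoc q, hq _ (by omega)]
    grind
  have hlast := hbal.eq_of_flanked hmid hp hpn ((hq 1 (by omega)).not.2 (by decide))
  rw [add_assoc q, add_assoc q, hq _ (by omega)] at hlast
  grind

end IsBalancedIn

section PalLength

variable {A : Type*} [DecidableEq A] (Δ : ℕ → A)

lemma palLength_zero : palLength Δ 0 = 0 := rfl

lemma Pal_map_range_succ (n : ℕ) :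
    Pal ((List.range (n + 1)).map Δ) = palClosure (Pal ((List.range n).map Δ) ++ [Δ n]) := by
  rw [List.range_succ, List.map_append, List.map_singleton, Pal_append_singleton]

lemma palLength_strictMono : StrictMono (palLength Δ) :=
  strictMono_nat_of_lt_succ fun n => by
    have hle := (prefix_palClosure (Pal ((List.range n).map Δ) ++ [Δ n])).length_le
    rwa [← Pal_map_range_succ, List.length_append] at hle

end PalLength

namespace IsStdEpisturmian

variable {A : Type*} [DecidableEq A] {s Δ : ℕ → A} {m n k t : ℕ}

lemma isPrefixOf_append_singleton (hs : IsStdEpisturmian s Δ) (n : ℕ) :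
    IsPrefixOf (Pal ((List.range n).map Δ) ++ [Δ n]) s := by
  refine (hs (n + 1)).of_prefix ?_
  rw [Pal_map_range_succ]
  exact prefix_palClosure _

lemma apply_palLength (hs : IsStdEpisturmian s Δ) (n : ℕ) : s (palLength Δ n) = Δ n := by
  rw [← (hs.isPrefixOf_append_singleton n).getElem_eq (by simp [palLength])]
  simp [palLength]

lemma isPalFactor_palLength (hs : IsStdEpisturmian s Δ) (n : ℕ) :
    IsPalFactor s 0 (palLength Δ n) :=
  (hs n).reverse_drop_eq_iff.1 (by rw [List.drop_zero, reverse_Pal])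

lemma palLength_succ_le (hs : IsStdEpisturmian s Δ)
    (h : IsPalFactor s t (palLength Δ n + 1)) : palLength Δ (n + 1) ≤ palLength Δ n + 1 + t := by
  have hpre := hs.isPrefixOf_append_singleton n
  have hlen : (Pal ((List.range n).map Δ) ++ [Δ n]).length = palLength Δ n + 1 := by
    simp [palLength]
  rw [← hlen] at h ⊢
  rw [palLength, Pal_map_range_succ]
  exact length_palClosure_le (hpre.reverse_drop_eq_iff.2 h)

lemma palLength_succ_le_two_mul_add_one (hs : IsStdEpisturmian s Δ) (n : ℕ) :
    palLength Δ (n + 1) ≤ 2 * palLength Δ n + 1 := by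
  have hsingle : IsPalFactor s (palLength Δ n) (palLength Δ n + 1) := by
    intro i j hi hj hij
    congr 1
    omega
  have := hs.palLength_succ_le hsingle
  omega

lemma exists_palLength_eq (hs : IsStdEpisturmian s Δ) {q : ℕ} (hq : IsPalFactor s 0 q) :
    ∃ m, palLength Δ m = q := by
  rcases q.eq_zero_or_pos with rfl | hpos
  · exact ⟨0, palLength_zero Δ⟩
  obtain ⟨n, hnq, hqn⟩ := (palLength_strictMono Δ).exists_between_of_tendsto_atTop
    (palLength_strictMono Δ).tendsto_atTop hpos
  have hsuffix : IsPalFactor s (q - palLength Δ n - 1) (palLength Δ n + 1) :=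
    fun i j _ _ _ => hq i j (Nat.zero_le _) (Nat.zero_le _) (by omega)
  have := hs.palLength_succ_le hsuffix
  exact ⟨n + 1, by omega⟩

lemma apply_eq_apply_add_sub (hs : IsStdEpisturmian s Δ) {i : ℕ} (hi : i < palLength Δ n) :
    s i = s (i + (palLength Δ (n + 1) - palLength Δ n)) := by
  -- The composition of two reflections is a translation.
  have hlt : palLength Δ n < palLength Δ (n + 1) := palLength_strictMono Δ n.lt_succ_self
  calc s i = s (palLength Δ n - 1 - i) :=
        hs.isPalFactor_palLength n _ _ (by omega) (by omega) (by omega)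
    _ = s (i + (palLength Δ (n + 1) - palLength Δ n)) :=
        hs.isPalFactor_palLength (n + 1) _ _ (by omega) (by omega) (by omega)

lemma exists_lt_eq_of_palLength_succ_le (hs : IsStdEpisturmian s Δ)
    (h : palLength Δ (n + 1) ≤ 2 * palLength Δ n) :
    ∃ m < n, Δ m = Δ n ∧ palLength Δ (n + 1) + palLength Δ m = 2 * palLength Δ n := by
  have hlt : palLength Δ n < palLength Δ (n + 1) := palLength_strictMono Δ n.lt_succ_self
  have hpal := hs.isPalFactor_palLength n
  obtain ⟨m, hm⟩ : ∃ m, palLength Δ m = 2 * palLength Δ n - palLength Δ (n + 1) := by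
    refine hs.exists_palLength_eq fun i j _ _ hij => ?_
    rw [hs.apply_eq_apply_add_sub (n := n) (by omega)]
    exact hpal _ _ (by omega) (by omega) (by omega)
  refine ⟨m, (palLength_strictMono Δ).lt_iff_lt.1 (by omega), ?_, by omega⟩
  rw [← hs.apply_palLength m, ← hs.apply_palLength n,
    hs.apply_eq_apply_add_sub (n := n) (by omega)]
  congr 1
  omega

lemma palLength_succ_add_le (hs : IsStdEpisturmian s Δ) (hmn : m < n) (h : Δ m = Δ n) :
    palLength Δ (n + 1) + palLength Δ m ≤ 2 * palLength Δ n := by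
  have hlt : palLength Δ m < palLength Δ n := palLength_strictMono Δ hmn
  have hpal := hs.isPalFactor_palLength n
  have hend : s (palLength Δ n - palLength Δ m - 1) = s (palLength Δ n) := by
    rw [hs.apply_palLength, ← h, ← hs.apply_palLength m]
    exact hpal _ _ (by omega) (by omega) (by omega)
  have hsuffix : IsPalFactor s (palLength Δ n - palLength Δ m - 1) (palLength Δ n + 1) := by
    intro i j hi hj hij
    rcases eq_or_lt_of_le hi with rfl | hi
    · rw [hend]
      congr 1
      omega
    rcases eq_or_lt_of_le hj with rfl | hj
    · rw [hend]
      congr 1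
      omega
    calc s i = s (palLength Δ n - 1 - i) := hpal _ _ (by omega) (by omega) (by omega)
      _ = s (palLength Δ n - 1 - j) :=
        hs.isPalFactor_palLength m _ _ (by omega) (by omega) (by omega)
      _ = s j := hpal _ _ (by omega) (by omega) (by omega)
  have := hs.palLength_succ_le hsuffix
  omega

lemma palLength_succ_of_forall_ne (hs : IsStdEpisturmian s Δ) (h : ∀ m < n, Δ m ≠ Δ n) :
    palLength Δ (n + 1) = 2 * palLength Δ n + 1 := by
  refine le_antisymm (hs.palLength_succ_le_two_mul_add_one n) ?_
  by_contra! hlt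
  obtain ⟨m, hm, heq, -⟩ := hs.exists_lt_eq_of_palLength_succ_le (n := n) (by omega)
  exact h m hm heq

lemma exists_palLength_succ_add (hs : IsStdEpisturmian s Δ) (h : ∃ m < n, Δ m = Δ n) :
    ∃ m < n, Δ m = Δ n ∧ palLength Δ (n + 1) + palLength Δ m = 2 * palLength Δ n := by
  obtain ⟨m, hm, heq⟩ := h
  have := hs.palLength_succ_add_le hm heq
  exact hs.exists_lt_eq_of_palLength_succ_le (by omega)

lemma exists_lt_eq_of_lt_palLength (hs : IsStdEpisturmian s Δ) {i : ℕ}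
    (hi : i < palLength Δ n) : ∃ m < n, s i = Δ m := by
  induction n generalizing i with
  | zero => exact absurd hi (Nat.not_lt_zero i)
  | succ n ih =>
    have hle := hs.palLength_succ_le_two_mul_add_one n
    rcases lt_trichotomy i (palLength Δ n) with hlt | rfl | hgt
    · obtain ⟨m, hm, heq⟩ := ih hlt
      exact ⟨m, hm.trans n.lt_succ_self, heq⟩
    · exact ⟨n, n.lt_succ_self, hs.apply_palLength n⟩
    · obtain ⟨m, hm, heq⟩ := ih (i := palLength Δ (n + 1) - 1 - i) (by omega)
      refine ⟨m, hm.trans n.lt_succ_self, ?_⟩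
      rw [← heq]
      exact hs.isPalFactor_palLength (n + 1) _ _ (by omega) (by omega) (by omega)

lemma exists_eq_directive (hs : IsStdEpisturmian s Δ) (i : ℕ) : ∃ n, s i = Δ n := by
  have hlt : i < palLength Δ (i + 1) := (palLength_strictMono Δ).le_apply
  obtain ⟨n, -, hn⟩ := hs.exists_lt_eq_of_lt_palLength hlt
  exact ⟨n, hn⟩

lemma palLength_one (hs : IsStdEpisturmian s Δ) : palLength Δ 1 = 1 :=
  hs.palLength_succ_of_forall_ne (n := 0) (by simp)

lemma odd_palLength_succ (hs : IsStdEpisturmian s Δ) (h : ∀ i < n, Δ (i + 1) ≠ Δ 0) :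
    Odd (palLength Δ (n + 1)) := by
  induction n using Nat.strong_induction_on with
  | _ n ih =>
    by_cases hnew : ∃ m < n, Δ m = Δ n
    · obtain ⟨m, hm, heq, hadd⟩ := hs.exists_palLength_succ_add hnew
      have hm0 : m ≠ 0 := by
        rintro rfl
        exact h (n - 1) (by omega) (by rw [heq]; congr 1; omega)
      obtain ⟨m, rfl⟩ := Nat.exists_eq_succ_of_ne_zero hm0
      have := ih m (by omega) fun i hi => h i (by omega)
      grind
    · push Not at hnew
      rw [hs.palLength_succ_of_forall_ne hnew]
      exact odd_two_mul_add_one _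

lemma isAlternating_palLength_succ (hs : IsStdEpisturmian s Δ)
    (h : ∀ i < n, Δ (i + 1) ≠ Δ 0) : IsAlternating s (Δ 0) 0 (palLength Δ (n + 1)) := by
  induction n with
  | zero =>
    rw [zero_add, hs.palLength_one]
    intro j hj
    obtain rfl : j = 0 := by omega
    exact iff_of_true (hs.apply_palLength 0) Even.zero
  | succ n ih =>
    have h' : ∀ i < n, Δ (i + 1) ≠ Δ 0 := fun i hi => h i (hi.trans n.lt_succ_self)
    have hodd := hs.odd_palLength_succ h'
    have hlt : palLength Δ (n + 1) < palLength Δ (n + 1 + 1) :=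
      palLength_strictMono Δ (n + 1).lt_succ_self
    have hle := hs.palLength_succ_le_two_mul_add_one (n + 1)
    have hleft := (ih h').succ hodd (by rw [zero_add, hs.apply_palLength]; exact h n n.lt_succ_self)
    have hright := (ih h').reflect (j := 0 + (palLength Δ (n + 1 + 1) - palLength Δ (n + 1)))
      (hs.isPalFactor_palLength (n + 1 + 1)) hodd le_rfl (Nat.zero_le _) (by omega)
    have hglue := hleft.glue hright ((hs.odd_palLength_succ h).tsub_odd hodd) (by omega)
    rwa [Nat.sub_add_cancel hlt.le] at hglue

lemma apply_eq_apply_mod_two (hs : IsStdEpisturmian s Δ)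
    (h : palLength Δ (n + 1) = palLength Δ n + 2) {i : ℕ} (hi : i < palLength Δ (n + 1)) :
    s i = s (i % 2) := by
  induction i using Nat.strong_induction_on with
  | _ i ih =>
    rcases lt_or_ge i 2 with hi2 | hi2
    · rw [Nat.mod_eq_of_lt hi2]
    · obtain ⟨i, rfl⟩ := Nat.exists_eq_add_of_le' hi2
      have hperiod := hs.apply_eq_apply_add_sub (n := n) (i := i) (by omega)
      rw [h, Nat.add_sub_cancel_left] at hperiod
      rw [Nat.add_mod_right, ← hperiod, ih i (by omega) (by omega)]

lemma palLength_add_four_le (hs : IsStdEpisturmian s Δ) (h3 : ThreeLetters s) (hk : 0 < k)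
    (h : ∀ i < k, Δ (i + 1) ≠ Δ 0) (hall : ∀ n, ∃ m ≤ k, Δ m = Δ n) :
    palLength Δ k + 4 ≤ palLength Δ (k + 1) := by
  have hlt : palLength Δ k < palLength Δ (k + 1) := palLength_strictMono Δ k.lt_succ_self
  have hne : palLength Δ (k + 1) ≠ palLength Δ k + 2 := by
    intro heq
    have htwo : ∀ i, s i = s 0 ∨ s i = s 1 := by
      intro i
      obtain ⟨n, hn⟩ := hs.exists_eq_directive i
      obtain ⟨m, hm, hmn⟩ := hall n
      rw [hn, ← hmn, ← hs.apply_palLength m,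
        hs.apply_eq_apply_mod_two heq (palLength_strictMono Δ (Nat.lt_succ_of_le hm))]
      rcases Nat.mod_two_eq_zero_or_one (palLength Δ m) with h | h <;> simp [h]
    obtain ⟨_, _, _, h12, h13, h23, ⟨i₁, rfl⟩, ⟨i₂, rfl⟩, ⟨i₃, rfl⟩⟩ := h3
    grind
  have hodd := hs.odd_palLength_succ h
  have hodd' := hs.odd_palLength_succ (n := k - 1) fun i hi => h i (by omega)
  rw [Nat.sub_add_cancel hk] at hodd'
  grind

lemma exists_isAlternating_of_new_letter (hs : IsStdEpisturmian s Δ) (hk : 0 < k)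
    (h : ∀ i < k, Δ (i + 1) ≠ Δ 0) (hnew : ∃ n, ∀ m ≤ k, Δ m ≠ Δ n) :
    ∃ q, IsAlternating s (Δ 0) q (palLength Δ (k + 1) + 3) := by
  obtain ⟨n, hn, hmin⟩ : ∃ n, (∀ m ≤ k, Δ m ≠ Δ n) ∧ ∀ m < n, Δ m ≠ Δ n := by
    classical
    refine ⟨Nat.find hnew, Nat.find_spec hnew, fun m hm heq => Nat.find_min hnew hm ?_⟩
    rw [heq]
    exact Nat.find_spec hnew
  have hkn : k + 1 ≤ n := by
    by_contra! hnk
    exact hn n (by omega) rfl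
  have hle : palLength Δ (k + 1) ≤ palLength Δ n := (palLength_strictMono Δ).monotone hkn
  have hlen := hs.palLength_succ_of_forall_ne hmin
  have hone : palLength Δ 1 < palLength Δ (k + 1) := palLength_strictMono Δ (by omega)
  rw [hs.palLength_one] at hone
  have hodd := hs.odd_palLength_succ h
  obtain ⟨q, hq⟩ := Nat.exists_eq_add_of_le' hle
  have hleft : IsAlternating s (Δ 0) q (palLength Δ (k + 1)) :=
    (hs.isAlternating_palLength_succ h).reflect (hs.isPalFactor_palLength n) hodd le_rfl
      (Nat.zero_le _) (by omega)
  have hright : IsAlternating s (Δ 0) (q + (palLength Δ (k + 1) + 1)) (palLength Δ (k + 1)) :=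
    hleft.reflect (hs.isPalFactor_palLength (n + 1)) hodd (Nat.zero_le _) (Nat.zero_le _) (by omega)
  have hmiddle : s (q + palLength Δ (k + 1)) ≠ Δ 0 := by
    rw [← hq, hs.apply_palLength]
    exact (hn 0 (Nat.zero_le k)).symm
  exact ⟨q, ((hleft.succ hodd hmiddle).glue hright hodd.add_one le_rfl).mono (by omega)⟩

lemma palLength_add_two (hs : IsStdEpisturmian s Δ) (h : ∀ i < k, Δ (i + 1) ≠ Δ 0)
    (hk : Δ (k + 1) = Δ 0) : palLength Δ (k + 2) = 2 * palLength Δ (k + 1) := by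
  obtain ⟨m, hm, heq, hadd⟩ := hs.exists_palLength_succ_add (n := k + 1) ⟨0, k.succ_pos, hk.symm⟩
  cases m with
  | zero => rwa [palLength_zero, add_zero] at hadd
  | succ m => exact absurd (heq.trans hk) (h m (by omega))

lemma exists_isAlternating_of_old_letter (hs : IsStdEpisturmian s Δ)
    (h : ∀ i < k, Δ (i + 1) ≠ Δ 0) (hk : Δ (k + 1) = Δ 0) (hne : Δ (k + 2) ≠ Δ 0)
    (hold : ∃ m ≤ k, Δ m = Δ (k + 2)) (hgap : palLength Δ k + 3 ≤ palLength Δ (k + 1)) :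
    ∃ q, IsAlternating s (Δ 0) q (palLength Δ (k + 1) + 3) := by
  have hdouble := hs.palLength_add_two h hk
  obtain ⟨m, hm, heq, hadd⟩ := hs.exists_palLength_succ_add (n := k + 2) <| by
    obtain ⟨m, hm, heq⟩ := hold
    exact ⟨m, by omega, heq⟩
  have hm0 : m ≠ 0 := by
    rintro rfl
    exact hne heq.symm
  have hmk : m ≠ k + 1 := by
    rintro rfl
    exact hne (heq.symm.trans hk)
  have hle : palLength Δ m ≤ palLength Δ k := (palLength_strictMono Δ).monotone (by omega)
  have hodd := hs.odd_palLength_succ h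
  have hodd_m : Odd (palLength Δ m) := by
    obtain ⟨m, rfl⟩ := Nat.exists_eq_succ_of_ne_zero hm0
    exact hs.odd_palLength_succ fun i hi => h i (by omega)
  have hleft : IsAlternating s (Δ 0) (palLength Δ (k + 1)) (palLength Δ (k + 1)) :=
    (hs.isAlternating_palLength_succ h).reflect (hs.isPalFactor_palLength (k + 2)) hodd le_rfl
      (Nat.zero_le _) (by omega)
  have hright : IsAlternating s (Δ 0)
      (palLength Δ (k + 1) + (palLength Δ (k + 1) - palLength Δ m)) (palLength Δ (k + 1)) :=
    hleft.reflect (hs.isPalFactor_palLength (k + 2 + 1)) hodd (Nat.zero_le _) (Nat.zero_le _)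
      (by omega)
  exact ⟨_, (hleft.glue hright (hodd.tsub_odd hodd_m) (by omega)).mono (by omega)⟩

lemma exists_isAlternating (hs : IsStdEpisturmian s Δ) (h3 : ThreeLetters s) (hk : 0 < k)
    (h : ∀ i < k, Δ (i + 1) ≠ Δ 0) (hret : Δ (k + 1) = Δ 0) (hne : Δ (k + 2) ≠ Δ 0) :
    ∃ q, IsAlternating s (Δ 0) q (palLength Δ (k + 1) + 3) := by
  by_cases hnew : ∃ n, ∀ m ≤ k, Δ m ≠ Δ n
  · exact hs.exists_isAlternating_of_new_letter hk h hnew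
  · push Not at hnew
    have hgap := hs.palLength_add_four_le h3 hk h hnew
    exact hs.exists_isAlternating_of_old_letter h hret hne (hnew _) (by omega)

lemma exists_isAlternating_flanked (hs : IsStdEpisturmian s Δ) (h : ∀ i < k, Δ (i + 1) ≠ Δ 0)
    (hret : Δ (k + 1) = Δ 0) (hkn : k + 1 < n) (hn : Δ n = Δ 0) :
    ∃ p, s p = Δ 0 ∧ IsAlternating s (Δ 0) (p + 1) (palLength Δ (k + 1)) ∧
      s (p + 1 + palLength Δ (k + 1)) = Δ 0 := by
  have hlt : palLength Δ (k + 1) < palLength Δ n := palLength_strictMono Δ hkn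
  obtain ⟨p, hp⟩ := Nat.exists_eq_add_of_le' (Nat.succ_le_of_lt hlt)
  have hpal := hs.isPalFactor_palLength n
  refine ⟨p, ?_, ?_, ?_⟩
  · rw [← hret, ← hs.apply_palLength (k + 1)]
    exact hpal _ _ (Nat.zero_le _) (Nat.zero_le _) (by omega)
  · exact (hs.isAlternating_palLength_succ h).reflect hpal (hs.odd_palLength_succ h) le_rfl
      (Nat.zero_le _) (by omega)
  · rw [← hn, ← hs.apply_palLength n]
    congr 1
    omega

lemma directive_ne_of_add_two_le (hs : IsStdEpisturmian s Δ) (hbal : IsBalancedIn s (Δ 0))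
    (h3 : ThreeLetters s) (hk : 0 < k) (h : ∀ i < k, Δ (i + 1) ≠ Δ 0) (hret : Δ (k + 1) = Δ 0)
    (hne : Δ (k + 2) ≠ Δ 0) (hkn : k + 2 ≤ n) : Δ n ≠ Δ 0 := by
  intro hn
  obtain ⟨p, hp, hP, hpn⟩ := hs.exists_isAlternating_flanked h hret hkn hn
  obtain ⟨q, hq⟩ := hs.exists_isAlternating h3 hk h hret hne
  exact hbal.not_isAlternating_add_three (hs.odd_palLength_succ h) hp hP hpn q hq

end IsStdEpisturmian

lemma wcat_of_lt {A : Type*} {u : List A} {n : ℕ} (h : n < u.length) (s : ℕ → A) :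
    wcat u s n = u[n] :=
  dif_pos h

lemma wcat_length_add {A : Type*} (u : List A) (s : ℕ → A) (n : ℕ) :
    wcat u s (u.length + n) = s n := by
  simp [wcat]

theorem no_third_occurrence_general {A : Type*} [DecidableEq A] (s Δ : ℕ → A)
    (a : A) (y : List A) (z : ℕ → A)
    (hbal : IsBalancedIn s a) (hepi : IsStdEpisturmian s Δ) (h3 : ThreeLetters s)
    (hy : y ≠ []) (hay : a ∉ y) (hz : z 0 ≠ a) (hΔ : Δ = wcat (a :: y ++ [a]) z) :
    a ∉ Set.range z := by
  have hlen : (a :: y ++ [a]).length = y.length + 2 := by simp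
  have hfirst : Δ 0 = a := by rw [hΔ, wcat_of_lt (by simp)]; rfl
  have hmid : ∀ i < y.length, Δ (i + 1) ≠ a := by
    intro i hi heq
    rw [hΔ, wcat_of_lt (by omega)] at heq
    simp only [List.cons_append, List.getElem_cons_succ, List.getElem_append_left hi] at heq
    exact hay (heq ▸ List.getElem_mem hi)
  have hret : Δ (y.length + 1) = a := by rw [hΔ, wcat_of_lt (by omega)]; simp
  have htail (i : ℕ) : Δ (y.length + 2 + i) = z i := by rw [hΔ, ← hlen, wcat_length_add]
  rintro ⟨i, hi⟩
  subst hfirst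
  refine hepi.directive_ne_of_add_two_le hbal h3 (List.length_pos_iff.2 hy) hmid hret ?_
    (Nat.le_add_right _ i) ((htail i).trans hi)
  rwa [← add_zero (y.length + 2), htail]

/-- If `s` is a balanced standard episturmian sequence over at least 3 letters whose
directive sequence is `Δ = a·y·a·z` with `a` the first repeated letter and `z` not
starting with `a`, then `a` does not occur in `z`. -/
theorem no_third_occurrence {A : Type*} [DecidableEq A] (s Δ : ℕ → A)
    (a : A) (y : List A) (z : ℕ → A)
    (hbal : IsBalanced s) (hepi : IsStdEpisturmian s Δ) (h3 : ThreeLetters s)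
    (hy : y ≠ []) (hnd : y.Nodup) (hay : a ∉ y) (hz : z 0 ≠ a)
    (hΔ : Δ = wcat (a :: y ++ [a]) z) :
    a ∉ Set.range z := by
  exact no_third_occurrence_general s Δ a y z (fun u v hu hv huv => hbal u v hu hv huv a)
    hepi h3 hy hay hz hΔ
end

section
/- Let s be a balanced episturmian sequence over an alphabet A such that exactly k ≥ 3 distinct letters occur in s, and suppose that for every letter a occurring in s the frequency f_a(s) (the limit as n → ∞ of the number of occurrences of a in the length-n prefix of s divided by n) exists, and that these frequencies are pairwise distinct (f_a(s) ≠ f_b(s) for all distinct letters a, b occurring in s). Then there exist pairwise distinct letters a₁,…,a_k such that s has the same set of factors as (Pal(a₁·a₂⋯a_k))^ω. -/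
/-!
Let `D` be the directive sequence. Write `ψ_a` for the morphism fixing `a` and sending every other
letter `b` to `ab`, and `μ_u = ψ_{u₀} ∘ ψ_{u₁} ∘ ⋯`. Justin's formula `Pal(uv) = μ_u(Pal v) Pal(u)`
turns short factors of `Pal v` into long factors of `s`. If `y` does not occur in `u`, then a factor
`y · μ_u(X) Pal(u) · y` may not be as short as a factor `μ_u(z) Pal(u)` without `y`. Applied at the
first occurrences of the letters in `D`, this restriction leaves three shapes for `D`:

* `o L o^ω` with distinct letters in `oL`, where the period of the word is `Pal(oL)`;
* `o L o c^ω` with distinct letters in `oLc`, where the period is a conjugate of `Pal(oLc)`;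
* `u x c^ω` with `x ≠ c` and neither in `u`, where `x` and `c` occur once each in the period, so
  that by balance they have the same frequency.
-/

namespace Episturmian

variable {A : Type*}

section PalindromicClosure

/-- `r` is the longest palindromic suffix of `w`: the palindromic closure of `w` is obtained by
appending to `w` the reversal of what precedes `r`. -/
structure IsLongestPalSuffix (r w : List A) : Prop where
  isSuffix : r <:+ w
  palindrome : r.Palindrome
  length_le : ∀ r', r' <:+ w → r'.Palindrome → r'.length ≤ r.length

theorem exists_isLongestPalSuffix (w : List A) : ∃ r, IsLongestPalSuffix r w := by
  classical
  have hex : ∃ i, (w.drop i).Palindrome := ⟨w.length, by simpa using .nil⟩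
  refine ⟨w.drop (Nat.find hex), w.drop_suffix _, Nat.find_spec hex, fun r' hr' hpal => ?_⟩
  rw [List.suffix_iff_eq_drop.1 hr'] at hpal
  have := Nat.find_min' hex hpal
  have := hr'.length_le
  rw [List.length_drop]
  lia

theorem palClosure_append_of_isLongestPalSuffix [DecidableEq A] {g r : List A}
    (h : IsLongestPalSuffix r (g ++ r)) : palClosure (g ++ r) = g ++ r ++ g.reverse := by
  unfold palClosure
  have hfind : Nat.find (⟨(g ++ r).length, by simp⟩ :
      ∃ i, ((g ++ r).drop i).reverse = (g ++ r).drop i) = g.length := by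
    refine (Nat.find_eq_iff _).2 ⟨by simpa using h.palindrome.reverse_eq, fun n hn hpal => ?_⟩
    have := h.length_le _ (List.drop_suffix n _) (.of_reverse_eq hpal)
    simp only [List.length_drop, List.length_append] at this
    lia
  rw [hfind, List.take_left]

theorem exists_eq_cons_of_palindrome_append_singleton {x : A} {l : List A}
    (h : (l ++ [x]).Palindrome) : ∃ l', l ++ [x] = x :: l' :=
  ⟨l.reverse, by simpa using h.reverse_eq.symm⟩

theorem IsLongestPalSuffix.cons_append_singleton {a : A} {g r : List A}
    (h : IsLongestPalSuffix r (g ++ a :: r)) :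
    IsLongestPalSuffix (a :: (r ++ [a])) (g ++ a :: (r ++ [a])) := by
  refine ⟨List.suffix_append _ _, .cons_concat a h.palindrome, fun R hR hpal => ?_⟩
  rw [← List.cons_append, ← List.append_assoc, List.suffix_concat_iff] at hR
  cases hpal with
  | nil => simp
  | singleton => simp
  | @cons_concat y l hl =>
    obtain hR | ⟨t, ht, hsuf⟩ := hR
    · exact (List.cons_ne_nil _ _ hR).elim
    rw [← List.cons_append] at ht
    obtain ⟨rfl, rfl⟩ := List.append_singleton_inj.1 ht
    simpa using h.length_le l ((List.suffix_cons _ l).trans hsuf) hl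

theorem palClosure_append_singleton [DecidableEq A] {a : A} {g r : List A}
    (h : IsLongestPalSuffix r (g ++ a :: r)) :
    palClosure (g ++ a :: r ++ [a]) = palClosure (g ++ a :: r) := by
  have h₁ := palClosure_append_of_isLongestPalSuffix h.cons_append_singleton
  have h₂ := palClosure_append_of_isLongestPalSuffix (g := g ++ [a]) (r := r) (by simpa using h)
  simp only [List.append_assoc, List.cons_append, List.nil_append, List.reverse_append,
    List.reverse_cons, List.reverse_nil] at h₁ h₂ ⊢
  rw [h₁, h₂]

end PalindromicClosure

section Morphisms

variable [DecidableEq A]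

/-- The morphism `ψ_a`, fixing `a` and sending every other letter `b` to `ab`. -/
def psi (a : A) (w : List A) : List A :=
  w.flatMap fun b => if b = a then [a] else [a, b]

@[simp] theorem psi_nil (a : A) : psi a [] = [] := rfl

theorem psi_cons_self (a : A) (w : List A) : psi a (a :: w) = a :: psi a w := by simp [psi]

theorem psi_cons_of_ne {a b : A} (h : b ≠ a) (w : List A) :
    psi a (b :: w) = a :: b :: psi a w := by simp [psi, h]

theorem psi_append (a : A) (v w : List A) : psi a (v ++ w) = psi a v ++ psi a w :=
  List.flatMap_append

theorem exists_psi_append_singleton_eq_cons (a : A) (w : List A) :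
    ∃ r, psi a w ++ [a] = a :: r := by
  cases w with
  | nil => exact ⟨[], rfl⟩
  | cons b w =>
    by_cases hb : b = a
    · exact ⟨psi a w ++ [a], by rw [hb, psi_cons_self, List.cons_append]⟩
    · exact ⟨b :: psi a w ++ [a], by rw [psi_cons_of_ne hb, List.cons_append]⟩

theorem psi_ne_cons_of_ne {a b : A} (h : b ≠ a) (v w : List A) : psi a v ≠ b :: w := by
  intro hv
  obtain ⟨r, hr⟩ := exists_psi_append_singleton_eq_cons a v
  rw [hv] at hr
  exact h (List.cons.inj hr).1

theorem psi_injective (a : A) : Function.Injective (psi a) := by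
  intro v
  induction v with
  | nil =>
    rintro (_ | ⟨b, w⟩) h
    · rfl
    · by_cases hb : b = a <;> simp [hb, psi] at h
  | cons c v ih =>
    rintro (_ | ⟨b, w⟩) h
    · by_cases hc : c = a <;> simp [hc, psi] at h
    by_cases hc : c = a <;> by_cases hb : b = a
    · rw [hc, hb, psi_cons_self, psi_cons_self] at h
      rw [hc, hb, ih (List.cons.inj h).2]
    · rw [hc, psi_cons_self, psi_cons_of_ne hb] at h
      exact (psi_ne_cons_of_ne hb _ _ (List.cons.inj h).2).elim
    · rw [hb, psi_cons_self, psi_cons_of_ne hc] at h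
      exact (psi_ne_cons_of_ne hc _ _ (List.cons.inj h).2.symm).elim
    · rw [psi_cons_of_ne hc, psi_cons_of_ne hb] at h
      obtain ⟨rfl, h'⟩ := List.cons.inj (List.cons.inj h).2
      rw [ih h']

theorem psi_reverse_append_singleton (a : A) (w : List A) :
    psi a w.reverse ++ [a] = (psi a w ++ [a]).reverse := by
  induction w with
  | nil => rfl
  | cons b w ih =>
    rw [List.reverse_append, List.reverse_singleton, List.singleton_append] at ih ⊢
    by_cases hb : b = a
    · rw [hb, List.reverse_cons, psi_append, psi_cons_self, psi_cons_self, psi_nil, ih]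
      simp
    · rw [List.reverse_cons, psi_append, psi_cons_of_ne hb, psi_cons_of_ne hb, psi_nil,
        List.append_assoc, List.cons_append, List.append_cons, ih]
      simp

theorem palindrome_psi_append_singleton_iff {a : A} {w : List A} :
    (psi a w ++ [a]).Palindrome ↔ w.Palindrome := by
  rw [List.Palindrome.iff_reverse_eq, ← psi_reverse_append_singleton, List.append_left_inj,
    (psi_injective a).eq_iff, List.Palindrome.iff_reverse_eq]

theorem psi_suffix_psi (a : A) {v w : List A} (h : v <:+ w) : psi a v <:+ psi a w := by
  obtain ⟨u, rfl⟩ := h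
  rw [psi_append]
  exact List.suffix_append _ _

theorem eq_psi_or_eq_cons_psi_of_suffix_psi {a : A} {w R : List A} (h : R <:+ psi a w) :
    (∃ r, r <:+ w ∧ R = psi a r) ∨ ∃ b r, b ≠ a ∧ b :: r <:+ w ∧ R = b :: psi a r := by
  induction w with
  | nil => exact .inl ⟨[], List.suffix_rfl, List.suffix_nil.1 h⟩
  | cons b w ih =>
    have of_tail (h : R <:+ psi a w) : (∃ r, r <:+ b :: w ∧ R = psi a r) ∨
        ∃ c r, c ≠ a ∧ c :: r <:+ b :: w ∧ R = c :: psi a r := (ih h).imp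
      (fun ⟨r, hr, e⟩ => ⟨r, hr.trans (List.suffix_cons b w), e⟩)
      (fun ⟨c, r, hc, hr, e⟩ => ⟨c, r, hc, hr.trans (List.suffix_cons b w), e⟩)
    by_cases hb : b = a
    · subst hb
      rw [psi_cons_self, List.suffix_cons_iff] at h
      obtain rfl | h := h
      · exact .inl ⟨b :: w, List.suffix_rfl, (psi_cons_self b w).symm⟩
      · exact of_tail h
    · rw [psi_cons_of_ne hb, List.suffix_cons_iff, List.suffix_cons_iff] at h
      obtain rfl | rfl | h := h
      · exact .inl ⟨b :: w, List.suffix_rfl, (psi_cons_of_ne hb w).symm⟩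
      · exact .inr ⟨b, w, hb, List.suffix_rfl, rfl⟩
      · exact of_tail h

theorem cons_suffix_psi_of_ne {a x : A} (hx : x ≠ a) {w R : List A} (h : x :: R <:+ psi a w) :
    a :: x :: R <:+ psi a w := by
  obtain ⟨r, -, hr⟩ | ⟨b, r, hb, hr, e⟩ := eq_psi_or_eq_cons_psi_of_suffix_psi h
  · exact (psi_ne_cons_of_ne hx r R hr.symm).elim
  · rw [e, ← psi_cons_of_ne hb]
    exact psi_suffix_psi a hr

theorem IsLongestPalSuffix.psi_append_singleton (a : A) {r w : List A}
    (h : IsLongestPalSuffix r w) : IsLongestPalSuffix (psi a r ++ [a]) (psi a w ++ [a]) := by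
  refine ⟨?_, palindrome_psi_append_singleton_iff.2 h.palindrome, fun R hR hpal => ?_⟩
  · exact List.suffix_concat_iff.2 (.inr ⟨_, rfl, psi_suffix_psi a h.isSuffix⟩)
  obtain rfl | ⟨R, rfl, hRw⟩ := List.suffix_concat_iff.1 hR
  · simp
  obtain ⟨r', hr', rfl⟩ | ⟨b, r', hb, -, rfl⟩ := eq_psi_or_eq_cons_psi_of_suffix_psi hRw
  · have hle := h.length_le r' hr' (palindrome_psi_append_singleton_iff.1 hpal)
    have hsuf := List.suffix_of_suffix_length_le hr' h.isSuffix hle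
    simpa using (psi_suffix_psi a hsuf).length_le
  · obtain ⟨l, hl⟩ := exists_eq_cons_of_palindrome_append_singleton hpal
    exact (hb (List.cons.inj hl).1).elim

theorem palClosure_psi_append_singleton (a : A) (w : List A) :
    palClosure (psi a w ++ [a]) = psi a (palClosure w) ++ [a] := by
  obtain ⟨r, hr⟩ := exists_isLongestPalSuffix w
  obtain ⟨g, rfl⟩ := hr.isSuffix
  have hψ := hr.psi_append_singleton a
  rw [psi_append, List.append_assoc] at hψ
  rw [palClosure_append_of_isLongestPalSuffix hr, psi_append, psi_append, List.append_assoc,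
    palClosure_append_of_isLongestPalSuffix hψ, psi_append, List.append_assoc _ _ [a],
    psi_reverse_append_singleton]
  simp

theorem palClosure_psi_of_ne {a x : A} (hx : x ≠ a) (w : List A) :
    palClosure (psi a (w ++ [x])) = psi a (palClosure (w ++ [x])) ++ [a] := by
  rw [← palClosure_psi_append_singleton]
  have hlast : psi a (w ++ [x]) = psi a w ++ [a] ++ [x] := by
    rw [psi_append, psi_cons_of_ne hx, psi_nil, List.append_cons]
  obtain ⟨r, hr⟩ := exists_isLongestPalSuffix (psi a (w ++ [x]))
  obtain ⟨r', rfl⟩ : ∃ r', r = x :: r' := by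
    obtain rfl | ⟨t, rfl, -⟩ := List.suffix_concat_iff.1 (hlast ▸ hr.isSuffix)
    · have := hr.length_le [x] (hlast ▸ List.suffix_append _ _) (.singleton x)
      simp at this
    · exact exists_eq_cons_of_palindrome_append_singleton hr.palindrome
  obtain ⟨g, hg⟩ := cons_suffix_psi_of_ne hx hr.isSuffix
  rw [← hg] at hr ⊢
  exact (palClosure_append_singleton hr).symm

theorem Pal_append_singleton (w : List A) (x : A) :
    Pal (w ++ [x]) = palClosure (Pal w ++ [x]) := by
  simp [Pal]

@[simp] theorem Pal_nil : Pal ([] : List A) = [] := rfl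

theorem Pal_cons (a : A) (w : List A) : Pal (a :: w) = psi a (Pal w) ++ [a] := by
  induction w using List.reverseRecOn with
  | nil =>
    have hr : IsLongestPalSuffix [a] ([] ++ [a]) :=
      ⟨List.suffix_rfl, .singleton a, fun r' h _ => h.length_le⟩
    exact palClosure_append_of_isLongestPalSuffix hr
  | append_singleton w x ih =>
    rw [← List.cons_append, Pal_append_singleton, ih, Pal_append_singleton]
    by_cases hx : x = a
    · rw [← palClosure_psi_append_singleton, psi_append, hx, psi_cons_self, psi_nil]
    · rw [← palClosure_psi_of_ne hx, psi_append, psi_cons_of_ne hx, psi_nil]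
      simp

/-- The morphism `μ_u = ψ_{u₀} ∘ ψ_{u₁} ∘ ⋯`, the composition of the `ψ_a` along the letters
of `u`. -/
def mu (u w : List A) : List A := u.foldr psi w

@[simp] theorem mu_nil (w : List A) : mu [] w = w := rfl

theorem mu_cons (a : A) (u w : List A) : mu (a :: u) w = psi a (mu u w) := rfl

theorem mu_append_left (u v w : List A) : mu (u ++ v) w = mu u (mu v w) :=
  List.foldr_append

theorem mu_append (u v w : List A) : mu u (v ++ w) = mu u v ++ mu u w := by
  induction u with
  | nil => rfl
  | cons a u ih => rw [mu_cons, ih, psi_append, mu_cons, mu_cons]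

@[simp] theorem mu_nil_right (u : List A) : mu u [] = [] := by
  induction u with
  | nil => rfl
  | cons a u ih => rw [mu_cons, ih, psi_nil]

theorem mu_replicate (u : List A) (c : A) (m : ℕ) :
    mu u (List.replicate m c) = (List.replicate m (mu u [c])).flatten := by
  induction m with
  | zero => simp
  | succ m ih =>
    rw [List.replicate_succ, ← List.singleton_append, mu_append, ih, List.replicate_succ,
      List.flatten_cons]

/-- Justin's formula. -/
theorem Pal_append (u v : List A) : Pal (u ++ v) = mu u (Pal v) ++ Pal u := by
  induction u with
  | nil => simp
  | cons a u ih =>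
    rw [List.cons_append, Pal_cons, ih, psi_append, mu_cons, Pal_cons, List.append_assoc]

theorem Pal_replicate (c : A) (m : ℕ) : Pal (List.replicate m c) = List.replicate m c := by
  have hpsi (n : ℕ) : psi c (List.replicate n c) = List.replicate n c := by
    simp [psi, List.flatMap_replicate]
  induction m with
  | zero => rfl
  | succ m ih => rw [List.replicate_succ, Pal_cons, ih, hpsi, ← List.replicate_succ',
      List.replicate_succ]

theorem Pal_singleton (a : A) : Pal [a] = [a] := Pal_replicate a 1

theorem mu_singleton_of_notMem {u : List A} {y : A} (hy : y ∉ u) : mu u [y] = Pal u ++ [y] := by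
  induction u with
  | nil => rfl
  | cons a u ih =>
    rw [List.mem_cons, not_or] at hy
    rw [mu_cons, ih hy.2, psi_append, psi_cons_of_ne hy.1, Pal_cons]
    simp

theorem mu_cons_singleton_of_notMem {o : A} {u : List A} (ho : o ∉ u) :
    mu (o :: u) [o] = Pal (o :: u) := by
  rw [mu_cons, mu_singleton_of_notMem ho, psi_append, psi_cons_self, psi_nil, Pal_cons]

theorem Pal_append_singleton_of_notMem {u : List A} {x : A} (hx : x ∉ u) :
    Pal (u ++ [x]) = Pal u ++ [x] ++ Pal u := by
  rw [Pal_append, Pal_singleton, mu_singleton_of_notMem hx]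

theorem psi_append_singleton_infix_Pal {v X : List A} (a : A) (h : X <:+: Pal v) :
    psi a X ++ [a] <:+: Pal (a :: v) := by
  obtain ⟨s, t, hst⟩ := h
  obtain ⟨r, hr⟩ := exists_psi_append_singleton_eq_cons a t
  exact ⟨psi a s, r, by rw [Pal_cons, ← hst]; simp [psi_append, hr]⟩

theorem mu_append_Pal_infix_Pal {v X : List A} (u : List A) (h : X <:+: Pal v) :
    mu u X ++ Pal u <:+: Pal (u ++ v) := by
  induction u with
  | nil => simpa using h
  | cons a u ih =>
    simpa [psi_append, mu_cons, Pal_cons] using psi_append_singleton_infix_Pal a ih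

theorem count_psi_of_ne {a b : A} (h : b ≠ a) (w : List A) : (psi a w).count b = w.count b := by
  induction w with
  | nil => rfl
  | cons c w ih =>
    by_cases hc : c = a
    · rw [hc, psi_cons_self, List.count_cons_of_ne h.symm, List.count_cons_of_ne h.symm, ih]
    · rw [psi_cons_of_ne hc, List.count_cons_of_ne h.symm, List.count_cons, List.count_cons, ih]

theorem count_mu_of_notMem {u : List A} {b : A} (h : b ∉ u) (w : List A) :
    (mu u w).count b = w.count b := by
  induction u with
  | nil => rfl
  | cons a u ih =>
    rw [List.mem_cons, not_or] at h
    rw [mu_cons, count_psi_of_ne h.1, ih h.2]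

theorem mem_Pal_iff {w : List A} {b : A} : b ∈ Pal w ↔ b ∈ w := by
  induction w with
  | nil => simp
  | cons a w ih =>
    by_cases hb : b = a
    · simp [hb, Pal_cons]
    · rw [Pal_cons, List.mem_append, List.mem_singleton, List.mem_cons, ← ih,
        ← List.count_pos_iff, count_psi_of_ne hb, List.count_pos_iff, or_comm]

theorem length_le_length_psi (a : A) (w : List A) : w.length ≤ (psi a w).length := by
  induction w with
  | nil => simp
  | cons b w ih => by_cases hb : b = a <;> simp [hb, psi_cons_self, psi_cons_of_ne] <;> lia

theorem length_le_length_Pal (w : List A) : w.length ≤ (Pal w).length := by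
  induction w with
  | nil => simp
  | cons b w ih =>
    rw [Pal_cons, List.length_append, List.length_cons, List.length_singleton]
    exact Nat.succ_le_succ (ih.trans (length_le_length_psi b _))

theorem length_le_length_mu (u w : List A) : w.length ≤ (mu u w).length := by
  induction u with
  | nil => rfl
  | cons b u ih => exact ih.trans (length_le_length_psi b _)

theorem mu_append_singleton_self (u : List A) (x : A) : mu (u ++ [x]) [x] = mu u [x] := by
  rw [mu_append_left, mu_cons, mu_nil, psi_cons_self, psi_nil]

theorem mu_append_singleton_of_ne (u : List A) {x y : A} (h : y ≠ x) :
    mu (u ++ [x]) [y] = mu u [x] ++ mu u [y] := by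
  rw [mu_append_left, mu_cons, mu_nil, psi_cons_of_ne h, psi_nil, ← mu_append,
    List.singleton_append]

theorem length_mu_add_count_le {u : List A} {z : A} (hz : z ∉ u) (o : A) :
    (mu u [o]).length + u.count o ≤ (mu u [z]).length := by
  induction u using List.reverseRecOn with
  | nil => simp
  | append_singleton u x ih =>
    rw [List.mem_append, List.mem_singleton, not_or] at hz
    have hlen := ih hz.1
    rw [mu_append_singleton_of_ne u hz.2, List.count_append, List.length_append]
    by_cases hx : o = x
    · subst hx
      have := length_le_length_mu u [o]
      rw [mu_append_singleton_self, List.count_singleton_self]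
      simp only [List.length_singleton] at this
      lia
    · have hcount : List.count o [x] = 0 := List.count_eq_zero.2 (by simpa using hx)
      rw [mu_append_singleton_of_ne u hx, List.length_append, hcount]
      lia

theorem two_le_length_mu {u : List A} {b z : A} (hb : b ∈ u) (hbz : b ≠ z) :
    2 ≤ (mu u [z]).length := by
  induction u using List.reverseRecOn with
  | nil => simp at hb
  | append_singleton u x ih =>
    by_cases hx : z = x
    · subst hx
      rw [mu_append_singleton_self]
      exact ih ((List.mem_append.1 hb).resolve_right (by simpa using hbz))
    · have := length_le_length_mu u [x]
      have := length_le_length_mu u [z]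
      rw [mu_append_singleton_of_ne u hx, List.length_append]
      simp only [List.length_singleton] at *
      lia

theorem count_mu_append_singleton_eq {u : List A} {x c : A} (hx : x ∉ u) (hc : c ∉ u ++ [x]) :
    (mu (u ++ [x]) [c]).count x = (mu (u ++ [x]) [c]).count c := by
  have hcx : c ≠ x := by
    rintro rfl
    exact hc (by simp)
  rw [count_mu_of_notMem hc, mu_append_singleton_of_ne u hcx, List.count_append,
    count_mu_of_notMem hx, count_mu_of_notMem hx]
  simp [hcx]

theorem mu_append_singleton_isRotated_Pal {o c : A} {L : List A} (h : (o :: L ++ [c]).Nodup) :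
    mu (o :: L ++ [o]) [c] ~r Pal (o :: L ++ [c]) := by
  have ho : o ∉ L := (List.nodup_cons.1 (h.sublist (List.sublist_append_left _ _))).1
  have hc : c ∉ o :: L := (List.nodup_append_comm.1 h).notMem
  rw [mu_append_singleton_of_ne _ (List.ne_of_not_mem_cons hc), mu_cons_singleton_of_notMem ho,
    mu_singleton_of_notMem hc, Pal_append_singleton_of_notMem hc]
  exact List.isRotated_append

end Morphisms

section InfiniteWords

/-- The factor `s i ⋯ s (i + n - 1)` of the infinite word `s`. -/
def segment (s : ℕ → A) (i n : ℕ) : List A := (List.range n).map fun j => s (i + j)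

@[simp] theorem length_segment (s : ℕ → A) (i n : ℕ) : (segment s i n).length = n := by
  simp [segment]

theorem segment_zero (s : ℕ → A) (n : ℕ) : segment s 0 n = (List.range n).map s := by
  simp [segment]

theorem segment_add (s : ℕ → A) (i m n : ℕ) :
    segment s i (m + n) = segment s i m ++ segment s (i + m) n := by
  simp [segment, List.range_add, Nat.add_assoc]

theorem segment_one (s : ℕ → A) (i : ℕ) : segment s i 1 = [s i] := rfl

theorem segment_succ (s : ℕ → A) (i n : ℕ) : segment s i (n + 1) = s i :: segment s (i + 1) n := by
  rw [Nat.add_comm, segment_add, segment_one, List.singleton_append]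

theorem segment_zero_succ (s : ℕ → A) (n : ℕ) : segment s 0 (n + 1) = segment s 0 n ++ [s n] := by
  rw [segment_add, Nat.zero_add, segment_one]

theorem segment_zero_eq_cons (s : ℕ → A) {n : ℕ} (hn : 0 < n) :
    segment s 0 n = s 0 :: segment s 1 (n - 1) := by
  rw [← segment_succ, Nat.sub_add_cancel hn]

theorem mem_segment_iff {s : ℕ → A} {i n : ℕ} {b : A} :
    b ∈ segment s i n ↔ ∃ j, i ≤ j ∧ j < i + n ∧ s j = b := by
  simp only [segment, List.mem_map, List.mem_range]
  constructor
  · rintro ⟨t, ht, rfl⟩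
    exact ⟨i + t, by lia, by lia, rfl⟩
  · rintro ⟨j, hij, hj, rfl⟩
    exact ⟨j - i, by lia, by rw [Nat.add_sub_cancel' hij]⟩

theorem nodup_segment_zero {s : ℕ → A} {n : ℕ} (h : Set.InjOn s (Set.Iio n)) :
    (segment s 0 n).Nodup := by
  rw [segment_zero]
  exact List.nodup_range.map_on fun i hi j hj =>
    h (by simpa using hi) (by simpa using hj)

theorem isFactorOf_segment (s : ℕ → A) (i n : ℕ) : IsFactorOf (segment s i n) s :=
  ⟨i, by rw [length_segment, segment]⟩

theorem isFactorOf_singleton_iff {s : ℕ → A} {b : A} : IsFactorOf [b] s ↔ b ∈ Set.range s := by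
  simp [IsFactorOf, eq_comm]

theorem range_eq_of_isFactorOf_iff {s t : ℕ → A}
    (hF : ∀ u, IsFactorOf u s ↔ IsFactorOf u t) :
    Set.range s = Set.range t := by
  ext b
  rw [← isFactorOf_singleton_iff, hF, isFactorOf_singleton_iff]

theorem isFactorOf_of_isPrefixOf {u : List A} {s : ℕ → A} (h : IsPrefixOf u s) :
    IsFactorOf u s := by
  rw [h, ← segment_zero]
  exact isFactorOf_segment s 0 _

theorem eq_segment_of_append_eq_segment {u v : List A} {s : ℕ → A} {i n : ℕ}
    (h : u ++ v = segment s i n) :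
    u = segment s i u.length ∧ v = segment s (i + u.length) v.length := by
  have hn : n = u.length + v.length := by simpa using (congrArg List.length h).symm
  rw [hn, segment_add] at h
  exact List.append_inj h (length_segment _ _ _).symm

theorem isPrefixOf_of_append {u v : List A} {s : ℕ → A} (h : IsPrefixOf (u ++ v) s) :
    IsPrefixOf u s := by
  rw [IsPrefixOf, ← segment_zero] at h ⊢
  exact (eq_segment_of_append_eq_segment h).1

theorem isFactorOf_of_infix {u v : List A} {s : ℕ → A} (hv : IsFactorOf v s) (h : u <:+: v) :
    IsFactorOf u s := by
  obtain ⟨p, q, rfl⟩ := h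
  obtain ⟨i, hi⟩ := hv
  have hpu := (eq_segment_of_append_eq_segment (s := s) hi).1
  rw [(eq_segment_of_append_eq_segment hpu).2]
  exact isFactorOf_segment s _ _

theorem segment_wcat (u : List A) (s : ℕ → A) (n : ℕ) :
    segment (wcat u s) 0 (u.length + n) = u ++ segment s 0 n := by
  rw [segment_add]
  congr 1
  · exact List.ext_getElem (by simp) fun i _ hi => by simp [segment, wcat, hi]
  · simp [segment, wcat]

theorem segment_constW (c : A) (n : ℕ) : segment (constW c) 0 n = List.replicate n c := by
  simp [segment, constW]

theorem range_wcat_constW (u : List A) (c : A) :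
    Set.range (wcat u (constW c)) = {b | b ∈ u ++ [c]} := by
  ext b
  constructor
  · rintro ⟨n, rfl⟩
    by_cases hn : n < u.length <;> simp [wcat, constW, hn]
  · intro hb
    have hseg : u ++ [c] = segment (wcat u (constW c)) 0 (u.length + 1) := by
      rw [segment_wcat, segment_constW, List.replicate_one]
    rw [Set.mem_ofPred_eq, hseg, mem_segment_iff] at hb
    obtain ⟨j, -, -, hj⟩ := hb
    exact ⟨j, hj⟩

theorem eq_wcat_constW {s : ℕ → A} {c : A} {n : ℕ} (h : ∀ i ≥ n, s i = c) :
    s = wcat (segment s 0 n) (constW c) := by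
  funext i
  by_cases hi : i < n
  · simp [wcat, segment, hi]
  · simpa [wcat, constW, hi] using h i (not_lt.1 hi)

theorem getD_flatten_replicate (w : List A) (d : A) {m n : ℕ} (h : n < m * w.length) :
    (List.replicate m w).flatten.getD n d = perW w d n := by
  unfold perW
  induction m generalizing n with
  | zero => simp at h
  | succ m ih =>
    rw [List.replicate_succ, List.flatten_cons]
    obtain hn | hn := lt_or_ge n w.length
    · rw [List.getD_append _ _ _ _ hn, Nat.mod_eq_of_lt hn]
    · rw [List.getD_append_right _ _ _ _ hn, ih (by rw [Nat.succ_mul] at h; lia),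
        ← Nat.mod_eq_sub_mod hn]

theorem eq_perW_of_isPrefixOf {s : ℕ → A} {w : List A} (hw : w ≠ [])
    (h : ∀ m, IsPrefixOf (List.replicate m w).flatten s) (d : A) : s = perW w d := by
  funext n
  have hn : n < (n + 1) * w.length :=
    Nat.lt_of_lt_of_le (Nat.lt_succ_self n)
      (Nat.le_mul_of_pos_right _ (List.length_pos_iff.2 hw))
  rw [← getD_flatten_replicate w d hn, h (n + 1), List.getD_eq_getElem _ _ (by simpa using hn)]
  simp

theorem perW_rotate (w : List A) (d : A) (k n : ℕ) :
    perW (w.rotate k) d n = perW w d (n + k) := by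
  obtain rfl | hw := eq_or_ne w []
  · simp [perW]
  · have hlen := List.length_pos_iff.2 hw
    have hn := Nat.mod_lt n hlen
    simp only [perW, List.length_rotate]
    rw [List.getD_eq_getElem _ _ (by simpa using hn), List.getElem_rotate,
      List.getD_eq_getElem _ _ (Nat.mod_lt _ hlen)]
    simp

theorem isFactorOf_perW_of_isRotated {u v w : List A} {d : A} (h : v ~r w)
    (hu : IsFactorOf u (perW w d)) : IsFactorOf u (perW v d) := by
  obtain ⟨k, rfl⟩ := h
  obtain ⟨i, hi⟩ := hu
  refine ⟨i + k, hi.trans (List.map_congr_left fun j _ => ?_)⟩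
  rw [perW_rotate, Nat.add_right_comm]

theorem isFactorOf_perW_congr {v w : List A} (h : v ~r w) (d : A) (u : List A) :
    IsFactorOf u (perW v d) ↔ IsFactorOf u (perW w d) :=
  ⟨isFactorOf_perW_of_isRotated h.symm, isFactorOf_perW_of_isRotated h⟩

end InfiniteWords

section StandardEpisturmian

variable [DecidableEq A] {t D : ℕ → A}

theorem isPrefixOf_Pal_segment (hstd : IsStdEpisturmian t D) (n : ℕ) :
    IsPrefixOf (Pal (segment D 0 n)) t := by
  rw [segment_zero]
  exact hstd n

theorem isFactorOf_Pal_segment (hstd : IsStdEpisturmian t D) (n : ℕ) :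
    IsFactorOf (Pal (segment D 0 n)) t :=
  isFactorOf_of_isPrefixOf (isPrefixOf_Pal_segment hstd n)

theorem range_eq_of_isStdEpisturmian (hstd : IsStdEpisturmian t D) :
    Set.range t = Set.range D := by
  ext b
  constructor
  · rintro ⟨n, rfl⟩
    have hlen := length_le_length_Pal (segment D 0 (n + 1))
    rw [length_segment] at hlen
    have hmem : t n ∈ Pal (segment D 0 (n + 1)) := by
      rw [isPrefixOf_Pal_segment hstd (n + 1), ← segment_zero, mem_segment_iff]
      exact ⟨n, by lia, by lia, rfl⟩
    obtain ⟨j, -, -, hj⟩ := mem_segment_iff.1 (mem_Pal_iff.1 hmem)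
    exact ⟨j, hj⟩
  · rintro ⟨n, rfl⟩
    have hmem : D n ∈ segment D 0 (n + 1) := mem_segment_iff.2 ⟨n, by lia, by lia, rfl⟩
    exact isFactorOf_singleton_iff.1 (isFactorOf_of_infix (isFactorOf_Pal_segment hstd (n + 1))
      ((List.singleton_infix_iff _ _).2 (mem_Pal_iff.2 hmem)))

theorem isPrefixOf_flatten_replicate_mu {u : List A} {c : A}
    (hstd : IsStdEpisturmian t (wcat u (constW c))) (m : ℕ) :
    IsPrefixOf (List.replicate m (mu u [c])).flatten t := by
  have h := isPrefixOf_Pal_segment hstd (u.length + m)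
  rw [segment_wcat, segment_constW, Pal_append, Pal_replicate, mu_replicate] at h
  exact isPrefixOf_of_append h

theorem mu_singleton_ne_nil (u : List A) (c : A) : mu u [c] ≠ [] :=
  List.length_pos_iff.1 (length_le_length_mu u [c])

theorem eq_perW_mu_of_isStdEpisturmian {u : List A} {c : A}
    (hstd : IsStdEpisturmian t (wcat u (constW c))) (d : A) : t = perW (mu u [c]) d :=
  eq_perW_of_isPrefixOf (mu_singleton_ne_nil u c) (isPrefixOf_flatten_replicate_mu hstd) d

end StandardEpisturmian

section Balance

variable [DecidableEq A] {t : ℕ → A} {u v : List A}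

theorem count_le_of_isBalanced (hbal : IsBalanced t) {p q : List A} (hp : IsFactorOf p t)
    (hq : IsFactorOf q t) (hlen : p.length ≤ q.length) (b : A) : p.count b ≤ q.count b + 1 := by
  have htake := isFactorOf_of_infix hq (q.take_prefix p.length).isInfix
  calc p.count b ≤ (q.take p.length).count b + 1 := hbal _ _ hp htake (by simp [hlen]) b
    _ ≤ q.count b + 1 := Nat.succ_le_succ ((q.take_sublist _).count_le b)

/-- Otherwise the factor `y · μ_u(X) Pal(u) · y` would be no longer than `μ_u(z) Pal(u)`, in which
`y` does not occur. -/
theorem length_mu_lt_of_isBalanced (hbal : IsBalanced t) (hfac : IsFactorOf (Pal (u ++ v)) t)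
    {X : List A} {y z : A} (hy : y ∉ u) (hzy : z ≠ y) (hz : z ∈ v)
    (hX : [y] ++ X ++ [y] <:+: Pal v) : (mu u [z]).length < (mu u X).length + 2 := by
  by_contra! hlen
  have hlong : y :: (mu u X ++ Pal u) ++ [y] <:+: Pal (u ++ v) := by
    refine .trans ⟨Pal u, Pal u, ?_⟩ (mu_append_Pal_infix_Pal u hX)
    rw [mu_append, mu_append, mu_singleton_of_notMem hy]
    simp
  have hshort : mu u [z] ++ Pal u <:+: Pal (u ++ v) :=
    mu_append_Pal_infix_Pal u ((List.singleton_infix_iff _ _).2 (mem_Pal_iff.2 hz))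
  have hcount : (mu u [z] ++ Pal u).count y = 0 := by
    rw [List.count_append, count_mu_of_notMem hy, List.count_eq_zero.2 (mem_Pal_iff.not.2 hy),
      List.count_eq_zero.2 (by simpa using hzy.symm)]
  have := count_le_of_isBalanced hbal (isFactorOf_of_infix hfac hlong)
    (isFactorOf_of_infix hfac hshort) (by simp; lia) y
  rw [hcount] at this
  simp at this

theorem infix_Pal_cons_of_mem {b : A} (a : A) (hb : b ∈ v) :
    psi a [b] ++ [a] <:+: Pal (a :: v) :=
  psi_append_singleton_infix_Pal a ((List.singleton_infix_iff _ _).2 (mem_Pal_iff.2 hb))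

theorem cons_self_infix_Pal_of_mem {a : A} (ha : a ∈ v) : [a, a] <:+: Pal (a :: v) := by
  simpa [psi_cons_self] using infix_Pal_cons_of_mem a ha

theorem sandwich_infix_Pal_of_mem {a b : A} (hab : b ≠ a) (hb : b ∈ v) :
    [a] ++ [b] ++ [a] <:+: Pal (a :: v) := by
  simpa [psi_cons_of_ne hab] using infix_Pal_cons_of_mem a hb

theorem eq_of_mem_of_isBalanced (hbal : IsBalanced t) {b y z : A}
    (hfac : IsFactorOf (Pal (u ++ y :: v)) t) (hy : y ∉ u) (hyv : y ∈ v) (hzy : z ≠ y)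
    (hzv : z ∈ v) (hb : b ∈ u) : b = z := by
  by_contra hbz
  have := length_mu_lt_of_isBalanced (X := []) hbal hfac hy hzy (List.mem_cons_of_mem y hzv)
    (cons_self_infix_Pal_of_mem hyv)
  have := two_le_length_mu hb hbz
  simp only [mu_nil_right, List.length_nil] at *
  lia

theorem count_le_one_of_isBalanced (hbal : IsBalanced t) {o y z : A}
    (hfac : IsFactorOf (Pal (u ++ y :: v)) t) (hy : y ∉ u) (hoy : o ≠ y) (hov : o ∈ v)
    (hzu : z ∉ u) (hzy : z ≠ y) (hzv : z ∈ v) : u.count o ≤ 1 := by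
  have := length_mu_lt_of_isBalanced (X := [o]) hbal hfac hy hzy (List.mem_cons_of_mem y hzv)
    (sandwich_infix_Pal_of_mem hoy hov)
  have := length_mu_add_count_le hzu o
  lia

/-- With `p = Pal(ou)`, the factors `o p x p o` and `x p c p x` have the same length, but the first
has two more occurrences of `o`. -/
theorem not_isFactorOf_Pal_of_isBalanced (hbal : IsBalanced t) {o x c : A} (ho : o ∉ u)
    (hx : x ∉ o :: u) (hc : c ∉ o :: u) (hcx : c ≠ x) (hov : o ∈ v) (hcv : c ∈ v) :
    ¬ IsFactorOf (Pal (o :: u ++ x :: o :: v)) t := by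
  intro hfac
  have hxo : x ≠ o := List.ne_of_not_mem_cons hx
  have hco : c ≠ o := List.ne_of_not_mem_cons hc
  have hoxo : [o] ++ [x] ++ [o] <:+: Pal (x :: o :: v) := by
    have := psi_append_singleton_infix_Pal x (cons_self_infix_Pal_of_mem hov)
    rw [psi_cons_of_ne hxo.symm, psi_cons_of_ne hxo.symm] at this
    exact .trans ⟨[x], [x], rfl⟩ this
  have hxcx := sandwich_infix_Pal_of_mem hcx (List.mem_cons_of_mem o hcv)
  obtain ⟨r, hr⟩ := exists_psi_append_singleton_eq_cons o (Pal u)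
  rw [← Pal_cons] at hr
  have hfac_o : [o] ++ Pal (o :: u) ++ [x] ++ Pal (o :: u) ++ [o] <:+:
      Pal (o :: u ++ x :: o :: v) := by
    refine .trans ⟨psi o (Pal u), r, ?_⟩ (mu_append_Pal_infix_Pal (o :: u) hoxo)
    rw [mu_append, mu_append, mu_cons_singleton_of_notMem ho, mu_singleton_of_notMem hx]
    calc psi o (Pal u) ++ ([o] ++ Pal (o :: u) ++ [x] ++ Pal (o :: u) ++ [o]) ++ r
        = (psi o (Pal u) ++ [o]) ++ Pal (o :: u) ++ [x] ++ Pal (o :: u) ++ (o :: r) := by simp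
      _ = Pal (o :: u) ++ (Pal (o :: u) ++ [x]) ++ Pal (o :: u) ++ Pal (o :: u) := by
        rw [← Pal_cons, ← hr]
        simp
  have hfac_x : [x] ++ Pal (o :: u) ++ [c] ++ Pal (o :: u) ++ [x] <:+:
      Pal (o :: u ++ x :: o :: v) := by
    refine .trans ⟨Pal (o :: u), Pal (o :: u), ?_⟩ (mu_append_Pal_infix_Pal (o :: u) hxcx)
    rw [mu_append, mu_append, mu_singleton_of_notMem hx, mu_singleton_of_notMem hc]
    simp
  have := count_le_of_isBalanced hbal (isFactorOf_of_infix hfac hfac_o)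
    (isFactorOf_of_infix hfac hfac_x) (by simp) o
  simp [List.count_append, hxo, hco] at this

end Balance

section DirectiveSequence

/-- The letter `D j` occurs for the first time at index `j`. -/
def IsFirstOccurrence (D : ℕ → A) (j : ℕ) : Prop := ∀ i < j, D i ≠ D j

variable {t D : ℕ → A} {i j J K m : ℕ}

theorem IsFirstOccurrence.notMem_segment (h : IsFirstOccurrence D j) (hij : i ≤ j) :
    D j ∉ segment D 0 i := by
  rw [mem_segment_iff]
  rintro ⟨l, -, hl, hlj⟩
  exact h l (by lia) hlj

theorem exists_isFirstOccurrence_eq (D : ℕ → A) (i : ℕ) :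
    ∃ j ≤ i, IsFirstOccurrence D j ∧ D j = D i := by
  classical
  have hex : ∃ j, D j = D i := ⟨i, rfl⟩
  refine ⟨Nat.find hex, Nat.find_min' hex rfl, fun m hm => ?_, Nat.find_spec hex⟩
  rw [Nat.find_spec hex]
  exact Nat.find_min hex hm

theorem injOn_isFirstOccurrence (D : ℕ → A) : Set.InjOn D {j | IsFirstOccurrence D j} := by
  intro i hi j hj hij
  by_contra hne
  obtain h | h := lt_or_gt_of_ne hne
  · exact hj i h hij
  · exact hi j h hij.symm

theorem exists_last_isFirstOccurrence (hfin : (Set.range D).Finite) :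
    ∃ K, IsFirstOccurrence D K ∧ ∀ i, ∃ j ≤ K, D j = D i := by
  have hfirst : {j | IsFirstOccurrence D j}.Finite :=
    .of_finite_image (hfin.subset (Set.image_subset_range D _)) (injOn_isFirstOccurrence D)
  obtain ⟨K, hK, hmax⟩ := Set.exists_max_image _ id hfirst ⟨0, fun i hi => (by lia)⟩
  refine ⟨K, hK, fun i => ?_⟩
  obtain ⟨j, -, hj, hji⟩ := exists_isFirstOccurrence_eq D i
  exact ⟨j, hmax j hj, hji⟩

theorem exists_lt_ne_head_of_three_le_ncard (hcard : 3 ≤ (Set.range D).ncard)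
    (hlast : ∀ i, ∃ j ≤ K, D j = D i) : ∃ j < K, D j ≠ D 0 := by
  by_contra! hhead
  have hsub : Set.range D ⊆ {D 0, D K} := by
    rintro _ ⟨i, rfl⟩
    obtain ⟨j, hj, hji⟩ := hlast i
    obtain hjK | rfl := hj.lt_or_eq
    · exact .inl (hji.symm.trans (hhead j hjK))
    · exact .inr hji.symm
  have hpair : ({D 0, D K} : Set A).ncard ≤ 2 := by
    simpa using Set.ncard_insert_le (D 0) {D K}
  exact absurd (hcard.trans ((Set.ncard_le_ncard hsub).trans hpair)) (by lia)

theorem exists_last_ne_head (hj : j < K) (hj0 : D j ≠ D 0) :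
    ∃ J < K, D J ≠ D 0 ∧ ∀ i, J < i → i < K → D i = D 0 := by
  classical
  have hspec := Nat.findGreatest_spec (P := fun i => i < K ∧ D i ≠ D 0) hj.le ⟨hj, hj0⟩
  refine ⟨_, hspec.1, hspec.2, fun i hi hiK => ?_⟩
  by_contra hi0
  exact Nat.findGreatest_is_greatest hi hiK.le ⟨hiK, hi0⟩

theorem nodup_segment_append_singleton (hK : IsFirstOccurrence D K) (hm : m ≤ K)
    (hinj : Set.InjOn D (Set.Iio m)) : (segment D 0 m ++ [D K]).Nodup := by
  rw [← List.concat_eq_append]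
  exact (nodup_segment_zero hinj).concat (hK.notMem_segment hm)

variable [DecidableEq A]

theorem isFactorOf_Pal_segment_append (hstd : IsStdEpisturmian t D) (j n : ℕ) :
    IsFactorOf (Pal (segment D 0 j ++ D j :: segment D (j + 1) n)) t := by
  have := isFactorOf_Pal_segment hstd (j + (n + 1))
  rwa [segment_add, Nat.zero_add, segment_succ] at this

theorem eq_of_lt_of_recurs (hbal : IsBalanced t) (hstd : IsStdEpisturmian t D) {i₁ i₂ : ℕ}
    (hj : IsFirstOccurrence D j) (h₁ : j < i₁) (hji₁ : D i₁ = D j) (h₂ : j < i₂)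
    (hji₂ : D i₂ ≠ D j) (hi : i < j) : D i = D i₂ :=
  eq_of_mem_of_isBalanced hbal (isFactorOf_Pal_segment_append hstd j (i₁ + i₂))
    (hj.notMem_segment le_rfl) (mem_segment_iff.2 ⟨i₁, by lia, by lia, hji₁⟩) hji₂
    (mem_segment_iff.2 ⟨i₂, by lia, by lia, rfl⟩) (mem_segment_iff.2 ⟨i, by lia, by lia, rfl⟩)

theorem eq_zero_of_eq_head_of_recurs (hbal : IsBalanced t) (hstd : IsStdEpisturmian t D)
    (hJ : IsFirstOccurrence D J) (hK : IsFirstOccurrence D K) (hJK : J < K) (hm : J < m)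
    (hm0 : D m = D 0) (hiJ : i < J) (hi : D i = D 0) : i = 0 := by
  by_contra hi0
  have hcount : (segment D 0 J).count (D 0) ≤ 1 :=
    count_le_one_of_isBalanced hbal (isFactorOf_Pal_segment_append hstd J (K + m))
      (hJ.notMem_segment le_rfl) (hJ 0 (by lia)) (mem_segment_iff.2 ⟨m, by lia, by lia, hm0⟩)
      (hK.notMem_segment hJK.le) (hK J hJK).symm (mem_segment_iff.2 ⟨K, by lia, by lia, rfl⟩)
  rw [segment_zero_eq_cons D (by lia), List.count_cons_self] at hcount
  have : 0 < (segment D 1 (J - 1)).count (D 0) :=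
    List.count_pos_iff.2 (mem_segment_iff.2 ⟨i, by lia, by lia, hi⟩)
  lia

theorem ne_head_of_succ_lt (hbal : IsBalanced t) (hstd : IsStdEpisturmian t D)
    (hJ : IsFirstOccurrence D J) (hK : IsFirstOccurrence D K) (hJ0 : 0 < J) (hJK : J + 1 < K)
    (hJ1 : D (J + 1) = D 0) (hm : J + 1 < m) : D m ≠ D 0 := by
  intro hm0
  have hfac := isFactorOf_Pal_segment_append hstd J (K + m + 1)
  have hJnot := hJ.notMem_segment le_rfl
  have hKnot := hK.notMem_segment (i := J) (by lia)
  rw [segment_zero_eq_cons D hJ0] at hfac hJnot hKnot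
  rw [segment_succ, hJ1] at hfac
  refine not_isFactorOf_Pal_of_isBalanced hbal ?_ hJnot hKnot (hK J (by lia)).symm
    (mem_segment_iff.2 ⟨m, by lia, by lia, hm0⟩) (mem_segment_iff.2 ⟨K, by lia, by lia, rfl⟩) hfac
  rw [mem_segment_iff]
  rintro ⟨i, hi, hiJ, hi0⟩
  have : i = 0 := eq_zero_of_eq_head_of_recurs hbal hstd hJ hK (by lia) (by lia) hm0 (by lia) hi0
  lia

theorem eq_of_eq_of_ne_head (hbal : IsBalanced t) (hstd : IsStdEpisturmian t D)
    (hK : IsFirstOccurrence D K) (hiK : i < K) (hi0 : D i ≠ D 0) (hij : D j = D i) : j = i := by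
  obtain ⟨l, hli, hl, hlD⟩ := exists_isFirstOccurrence_eq D i
  have hlj : l ≤ j := not_lt.1 fun h => hl j h (hij.trans hlD.symm)
  have hl0 : l ≠ 0 := by
    rintro rfl
    exact hi0 hlD.symm
  by_contra hne
  obtain ⟨m, hlm, hm⟩ : ∃ m, l < m ∧ D m = D l := by
    obtain h | h := lt_or_gt_of_ne hne
    · exact ⟨i, by lia, hlD.symm⟩
    · exact ⟨j, by lia, hij.trans hlD.symm⟩
  exact hK 0 (by lia) (eq_of_lt_of_recurs hbal hstd hl hlm hm (by lia) (hK l (by lia)).symm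
    (by lia))

theorem tail_eq_head_or_tail_eq_last (hbal : IsBalanced t) (hstd : IsStdEpisturmian t D)
    (hK : IsFirstOccurrence D K) (hlast : ∀ i, ∃ j ≤ K, D j = D i) (hjK : j < K)
    (hj0 : D j ≠ D 0) : (∀ i > K, D i = D 0) ∨ ∀ i > K, D i = D K := by
  have htail (i : ℕ) (hi : K < i) : D i = D 0 ∨ D i = D K := by
    obtain ⟨l, hl, hli⟩ := hlast i
    obtain hlK | rfl := hl.lt_or_eq
    · refine .inl (by_contra fun hi0 => ?_)
      have := eq_of_eq_of_ne_head hbal hstd hK hlK (hli ▸ hi0) hli.symm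
      lia
    · exact .inr hli.symm
  by_cases hhead : ∃ m > K, D m = D 0
  · obtain ⟨m, hm, hm0⟩ := hhead
    refine .inl fun i hi => (htail i hi).resolve_right fun hiK => hj0 ?_
    have hmK : D m ≠ D K := hm0 ▸ hK 0 (by lia)
    exact (eq_of_lt_of_recurs hbal hstd hK hi hiK hm hmK hjK).trans hm0
  · exact .inr fun i hi => (htail i hi).resolve_left fun hi0 => hhead ⟨i, hi, hi0⟩

theorem isFirstOccurrence_of_ne_head (hbal : IsBalanced t) (hstd : IsStdEpisturmian t D)
    (hK : IsFirstOccurrence D K) (hJK : J < K) (hJ0 : D J ≠ D 0) : IsFirstOccurrence D J :=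
  fun _ hi h => hi.ne (eq_of_eq_of_ne_head hbal hstd hK hJK hJ0 h)

theorem injOn_of_head_recurs (hbal : IsBalanced t) (hstd : IsStdEpisturmian t D)
    (hK : IsFirstOccurrence D K) (hJK : J < K) (hJ0 : D J ≠ D 0) (hm : J < m)
    (hm0 : D m = D 0) : Set.InjOn D (Set.Iio (J + 1)) := by
  have hJ := isFirstOccurrence_of_ne_head hbal hstd hK hJK hJ0
  have hhead (i : ℕ) (hi : i < J + 1) (hi0 : D i = D 0) : i = 0 := by
    have hiJ : i ≠ J := fun h => hJ0 (h ▸ hi0)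
    exact eq_zero_of_eq_head_of_recurs hbal hstd hJ hK hJK hm hm0 (by lia) hi0
  intro i hi j hj hij
  rw [Set.mem_Iio] at hi hj
  by_cases hj0 : D j = D 0
  · rw [hhead i hi (hij.trans hj0), hhead j hj hj0]
  · exact eq_of_eq_of_ne_head hbal hstd hK (by lia) hj0 hij

theorem eq_succ_of_head_recurs (hbal : IsBalanced t) (hstd : IsStdEpisturmian t D)
    (hK : IsFirstOccurrence D K) (hJK : J < K) (hJ0 : D J ≠ D 0)
    (hgap : ∀ i, J < i → i < K → D i = D 0) (hm : J + 1 < m) (hm0 : D m = D 0) : K = J + 1 := by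
  by_contra hne
  have hJ := isFirstOccurrence_of_ne_head hbal hstd hK hJK hJ0
  have hJpos : 0 < J := Nat.pos_of_ne_zero (by rintro rfl; exact hJ0 rfl)
  exact ne_head_of_succ_lt hbal hstd hJ hK hJpos (by lia) (hgap _ (by lia) (by lia)) hm hm0

theorem exists_eq_wcat_of_tail_eq_head (hbal : IsBalanced t) (hstd : IsStdEpisturmian t D)
    (hK : IsFirstOccurrence D K) (hJK : J < K) (hJ0 : D J ≠ D 0)
    (hgap : ∀ i, J < i → i < K → D i = D 0) (htail : ∀ i > K, D i = D 0) :
    ∃ o L, (o :: L).Nodup ∧ D = wcat (o :: L) (constW o) := by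
  have hK0 := htail (K + 1) (by lia)
  have hKJ : K = J + 1 := eq_succ_of_head_recurs hbal hstd hK hJK hJ0 hgap (by lia) hK0
  have hinj := injOn_of_head_recurs hbal hstd hK hJK hJ0 (by lia) hK0
  rw [← hKJ] at hinj
  have hnodup := nodup_segment_append_singleton hK le_rfl hinj
  rw [← segment_zero_succ, segment_zero_eq_cons D K.succ_pos] at hnodup
  refine ⟨D 0, _, hnodup, ?_⟩
  rw [← segment_zero_eq_cons D K.succ_pos]
  exact eq_wcat_constW fun i hi => htail i hi

theorem exists_eq_wcat_of_tail_eq_last (hbal : IsBalanced t) (hstd : IsStdEpisturmian t D)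
    (hK : IsFirstOccurrence D K) (hJK : J < K) (hJ0 : D J ≠ D 0)
    (hgap : ∀ i, J < i → i < K → D i = D 0) (htail : ∀ i > K, D i = D K) :
    (∃ u x c, x ∉ u ∧ c ∉ u ++ [x] ∧ D = wcat (u ++ [x]) (constW c)) ∨
    ∃ o L c, (o :: L ++ [c]).Nodup ∧ D = wcat (o :: L ++ [o]) (constW c) := by
  have hD : D = wcat (segment D 0 K) (constW (D K)) := eq_wcat_constW fun i hi => by
    obtain rfl | hi := hi.eq_or_lt'
    · rfl
    · exact htail i hi
  obtain rfl | hKJ := (Nat.succ_le_of_lt hJK).eq_or_lt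
  · have hJ := isFirstOccurrence_of_ne_head hbal hstd hK hJK hJ0
    have hKnot := hK.notMem_segment le_rfl
    rw [segment_zero_succ] at hD hKnot
    exact .inl ⟨_, _, _, hJ.notMem_segment le_rfl, hKnot, hD⟩
  · have hJ1 := hgap (J + 1) (by lia) hKJ
    have hinj := injOn_of_head_recurs hbal hstd hK hJK hJ0 (by lia) hJ1
    have hKJ2 : K = J + 2 := by
      by_contra hne
      have := eq_succ_of_head_recurs hbal hstd hK hJK hJ0 hgap (Nat.lt_succ_self (J + 1))
        (hgap _ (by lia) (by lia))
      lia
    have hnodup := nodup_segment_append_singleton hK hJK hinj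
    have hsplit : segment D 0 K = segment D 0 (J + 1) ++ [D 0] := by
      rw [hKJ2, segment_zero_succ, hJ1]
    rw [hsplit] at hD
    rw [segment_zero_eq_cons D J.succ_pos] at hnodup hD
    exact .inr ⟨_, _, _, hnodup, hD⟩

theorem directive_cases (hbal : IsBalanced t) (hstd : IsStdEpisturmian t D)
    (hcard : 3 ≤ (Set.range D).ncard) :
    (∃ u x c, x ∉ u ∧ c ∉ u ++ [x] ∧ D = wcat (u ++ [x]) (constW c)) ∨
    (∃ o L, (o :: L).Nodup ∧ D = wcat (o :: L) (constW o)) ∨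
    ∃ o L c, (o :: L ++ [c]).Nodup ∧ D = wcat (o :: L ++ [o]) (constW c) := by
  have hfin : (Set.range D).Finite := Set.finite_of_ncard_pos (by lia)
  obtain ⟨K, hK, hlast⟩ := exists_last_isFirstOccurrence hfin
  obtain ⟨j, hjK, hj0⟩ := exists_lt_ne_head_of_three_le_ncard hcard hlast
  obtain ⟨J, hJK, hJ0, hgap⟩ := exists_last_ne_head hjK hj0
  obtain htail | htail := tail_eq_head_or_tail_eq_last hbal hstd hK hlast hjK hj0
  · exact .inr (.inl (exists_eq_wcat_of_tail_eq_head hbal hstd hK hJK hJ0 hgap htail))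
  · obtain h | h := exists_eq_wcat_of_tail_eq_last hbal hstd hK hJK hJ0 hgap htail
    · exact .inl h
    · exact .inr (.inr h)

end DirectiveSequence

section Frequency

variable {s : ℕ → A}

theorem le_of_tendsto_div_of_frequently_le {p q : ℕ → ℕ} {α β : ℝ} (C : ℕ)
    (hp : Filter.Tendsto (fun n => (p n : ℝ) / n) Filter.atTop (nhds α))
    (hq : Filter.Tendsto (fun n => (q n : ℝ) / n) Filter.atTop (nhds β))
    (hle : ∃ᶠ n in Filter.atTop, p n ≤ q n + C) : α ≤ β := by
  have hC := tendsto_const_div_atTop_nhds_zero_nat (C : ℝ)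
  have hle' : ∃ᶠ n : ℕ in Filter.atTop, (p n : ℝ) / n - (q n : ℝ) / n - (C : ℝ) / n ≤ 0 := by
    refine hle.mono fun n hn => ?_
    rw [← sub_div, ← sub_div]
    refine div_nonpos_of_nonpos_of_nonneg ?_ n.cast_nonneg
    have : (p n : ℝ) ≤ q n + C := by exact_mod_cast hn
    linarith
  have := le_of_tendsto_of_frequently ((hp.sub hq).sub hC) hle'
  linarith

variable [DecidableEq A]

theorem count_le_count_add_two (hbal : IsBalanced s) {p q : List A} (hp : IsFactorOf p s)
    (hq : IsFactorOf q s) (hlen : p.length = q.length) {x c : A} (hqc : q.count x = q.count c) :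
    p.count x ≤ p.count c + 2 :=
  calc p.count x ≤ q.count x + 1 := hbal p q hp hq hlen x
    _ = q.count c + 1 := by rw [hqc]
    _ ≤ p.count c + 2 := Nat.succ_le_succ (hbal q p hq hp hlen.symm c)

theorem frequently_count_le_count_add_two (hbal : IsBalanced s) {w : List A} (hw : w ≠ [])
    (hfac : ∀ m, IsFactorOf (List.replicate m w).flatten s) {x c : A}
    (hcount : w.count x = w.count c) :
    ∃ᶠ n in Filter.atTop,
      ((List.range n).map s).count x ≤ ((List.range n).map s).count c + 2 := by
  refine Filter.frequently_atTop.2 fun N => ⟨N * w.length, ?_, ?_⟩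
  · exact Nat.le_mul_of_pos_right N (List.length_pos_iff.2 hw)
  · exact count_le_count_add_two hbal (isFactorOf_of_isPrefixOf (by simp [IsPrefixOf])) (hfac N)
      (by simp) (by simp [List.count_flatten, hcount])

theorem frequency_eq_of_count_eq (hbal : IsBalanced s) {w : List A} (hw : w ≠ [])
    (hfac : ∀ m, IsFactorOf (List.replicate m w).flatten s) {x c : A}
    (hcount : w.count x = w.count c) {α β : ℝ}
    (hx : Filter.Tendsto (fun n : ℕ => (((List.range n).map s).count x : ℝ) / n)
      Filter.atTop (nhds α))
    (hc : Filter.Tendsto (fun n : ℕ => (((List.range n).map s).count c : ℝ) / n)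
      Filter.atTop (nhds β)) : α = β :=
  le_antisymm
    (le_of_tendsto_div_of_frequently_le 2 hx hc
      (frequently_count_le_count_add_two hbal hw hfac hcount))
    (le_of_tendsto_div_of_frequently_le 2 hc hx
      (frequently_count_le_count_add_two hbal hw hfac hcount.symm))

end Frequency

section FraenkelWords

theorem exists_injOn_map_range_eq {k : ℕ} {L : List A} (hL : L.Nodup) (hk : L.length = k)
    (d : A) : ∃ a : ℕ → A, Set.InjOn a (Set.Iio k) ∧ (List.range k).map a = L := by
  subst hk
  refine ⟨fun i => L.getD i d, fun i hi j hj hij => ?_, ?_⟩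
  · dsimp only at hij
    rw [List.getD_eq_getElem _ _ hi, List.getD_eq_getElem _ _ hj] at hij
    exact hL.getElem_inj_iff.1 hij
  · exact List.ext_getElem (by simp) fun i _ hi => by simp [hi]

theorem length_eq_ncard {S : Set A} {L : List A} (hL : L.Nodup) (hmem : ∀ b, b ∈ L ↔ b ∈ S) :
    L.length = S.ncard := by
  classical
  have hS : S = ↑L.toFinset := by
    ext b
    simp [hmem]
  rw [hS, Set.ncard_coe_finset, List.toFinset_card_of_nodup hL]

variable [DecidableEq A] {s t : ℕ → A}

theorem isBalanced_of_isFactorOf_iff (hF : ∀ u, IsFactorOf u s ↔ IsFactorOf u t)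
    (hbal : IsBalanced s) : IsBalanced t :=
  fun p q hp hq => hbal p q ((hF p).2 hp) ((hF q).2 hq)

theorem exists_fraenkel_or_exists_count_eq (hbal : IsBalanced s)
    (hepi : ∃ t Δ : ℕ → A, IsStdEpisturmian t Δ ∧ ∀ u, IsFactorOf u s ↔ IsFactorOf u t)
    (hcard : 3 ≤ (Set.range s).ncard) :
    (∃ L : List A, L.Nodup ∧ (∀ b, b ∈ L ↔ b ∈ Set.range s) ∧
      ∀ d u, IsFactorOf u s ↔ IsFactorOf u (perW (Pal L) d)) ∨
    ∃ x ∈ Set.range s, ∃ c ∈ Set.range s, x ≠ c ∧ ∃ w ≠ [], w.count x = w.count c ∧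
      ∀ m, IsFactorOf (List.replicate m w).flatten s := by
  obtain ⟨t, D, hstd, hF⟩ := hepi
  have hrange : Set.range s = Set.range D :=
    (range_eq_of_isFactorOf_iff hF).trans (range_eq_of_isStdEpisturmian hstd)
  rw [hrange] at hcard ⊢
  obtain ⟨u, x, c, hx, hc, rfl⟩ | ⟨o, L, hL, rfl⟩ | ⟨o, L, c, hL, rfl⟩ :=
    directive_cases (isBalanced_of_isFactorOf_iff hF hbal) hstd hcard
  · have hxc : x ≠ c := by
      rintro rfl
      exact hc (by simp)
    refine .inr ⟨x, ?_, c, ?_, hxc, mu (u ++ [x]) [c], mu_singleton_ne_nil _ c,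
      count_mu_append_singleton_eq hx hc, fun m => ?_⟩
    · simp [range_wcat_constW]
    · simp [range_wcat_constW]
    · exact (hF _).2 (isFactorOf_of_isPrefixOf (isPrefixOf_flatten_replicate_mu hstd m))
  · refine .inl ⟨o :: L, hL, fun b => ?_, fun d u => ?_⟩
    · simp [range_wcat_constW, or_comm]
    · rw [hF, eq_perW_mu_of_isStdEpisturmian hstd d,
        mu_cons_singleton_of_notMem (List.nodup_cons.1 hL).1]
  · refine .inl ⟨o :: L ++ [c], hL, fun b => ?_, fun d u => ?_⟩
    · simp only [range_wcat_constW, Set.mem_ofPred_eq, List.mem_append, List.mem_cons]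
      tauto
    · rw [hF, eq_perW_mu_of_isStdEpisturmian hstd d]
      exact isFactorOf_perW_congr (mu_append_singleton_isRotated_Pal hL) d u

end FraenkelWords

end Episturmian

/-- Fraenkel's conjecture for episturmian sequences: a balanced episturmian sequence
over exactly `k ≥ 3` letters whose letter frequencies exist and are pairwise distinct
has the same factors as `(Pal(a₁⋯a_k))^ω` for some pairwise distinct letters. -/
theorem fraenkel_for_episturmian {A : Type*} [DecidableEq A]
    (s : ℕ → A) (k : ℕ) (f : A → ℝ)
    (hbal : IsBalanced s)
    (hepi : ∃ t Δ : ℕ → A, IsStdEpisturmian t Δ ∧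
      ∀ u : List A, IsFactorOf u s ↔ IsFactorOf u t)
    (hk : 3 ≤ k) (hcard : (Set.range s).ncard = k)
    (hfreq : ∀ a ∈ Set.range s, Filter.Tendsto
      (fun n : ℕ => (((List.range n).map s).count a : ℝ) / n)
      Filter.atTop (nhds (f a)))
    (hdist : ∀ a ∈ Set.range s, ∀ b ∈ Set.range s, a ≠ b → f a ≠ f b) :
    ∃ a : ℕ → A, Set.InjOn a (Set.Iio k) ∧
      ∀ u : List A, IsFactorOf u s ↔
        IsFactorOf u (perW (Pal ((List.range k).map a)) (a 0)) := by
  obtain ⟨L, hL, hmem, hF⟩ | ⟨x, hx, c, hc, hxc, w, hw, hcount, hfac⟩ :=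
    Episturmian.exists_fraenkel_or_exists_count_eq hbal hepi (hcard ▸ hk)
  · have hlen : L.length = k := (Episturmian.length_eq_ncard hL hmem).trans hcard
    obtain ⟨a, ha, rfl⟩ := Episturmian.exists_injOn_map_range_eq hL hlen (s 0)
    exact ⟨a, ha, hF (a 0)⟩
  · exact absurd
      (Episturmian.frequency_eq_of_count_eq hbal hw hfac hcount (hfreq x hx) (hfreq c hc))
      (hdist x hx c hc hxc)
end
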